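/- Let p, q, a, b, c be positive integers and let s be a complex number with Re(s) > 1. Then S_{λ₁}(p,q,a,b,c,s) = (−1)^p Σ_{j=0}^{p} (−1)^j Λ(j;−i) Σ_{ω=0}^{p−j} C(ω+a−1,ω) C(p+c−j−ω−1,c−1) T(q+a+ω, s, p+b+c−j−ω; −1, i) + (−1)^{p+a} Σ_{j=0}^{c} Λ(j;−i) Σ_{ω=0}^{c−j} C(ω+a−1,ω) C(p+c−j−ω−1,p−1) T(q, s+a+ω, p+b+c−j−ω; −i, −1) + (−1)^p Σ_{j=0}^{a} Λ(j;−i) Σ_{ω=0}^{p−1} C(ω+a−j,ω) C(p+c−2−ω,c−1) T(q+a−j+ω+1, s, p+b+c−1−ω; −i, i) + (−1)^{p+a} Σ_{j=0}^{a} (−1)^j Λ(j;−i) Σ_{ω=0}^{c−1} C(ω+a−j,ω) C(p+c−2−ω,p−1) T(q, s+a−j+ω+1, p+b+c−1−ω; −i, i), where C(n,k) denotes the binomial coefficient. -/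

import Mathlib

open Complex Finset

/-- The primitive Dirichlet character of conductor 4 with values in `ℂ`. -/
noncomputable def chi4 : DirichletCharacter ℂ 4 := ZMod.χ₄.ringHomComp (Int.castRingHom ℂ)

/-- `L(s,χ₄)`, equal to `Σ_{m ≥ 0} (-1)^m (2m+1)^{-s}` at the relevant arguments. -/
noncomputable def Lchi4 (s : ℂ) : ℂ := DirichletCharacter.LFunction chi4 s

/-- `Λ(ξ;-i)`: equal to `2^{1-ξ}(2^{1-ξ}-1)ζ(ξ)` for even `ξ`, and to
`-2i L(ξ,χ₄)` for odd `ξ`. -/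
noncomputable def LamNegI (ξ : ℕ) : ℂ :=
  if Even ξ then (2 : ℂ) ^ ((1 : ℤ) - ξ) * ((2 : ℂ) ^ ((1 : ℤ) - ξ) - 1) * riemannZeta ξ
  else -(2 * Complex.I * Lchi4 ξ)

/-- `T(p,s,q;x,y) = Σ_{l ≠ 0, m ≥ 1, l+m ≠ 0} x^l y^m / (l^p m^s (l+m)^q)`. -/
noncomputable def T (p : ℕ) (s : ℂ) (q : ℕ) (x y : ℂ) : ℂ :=
  ∑' lm : ℤ × ℕ,
    if lm.1 ≠ 0 ∧ lm.1 + ((lm.2 : ℤ) + 1) ≠ 0 then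
      x ^ lm.1 * y ^ (lm.2 + 1) /
        ((lm.1 : ℂ) ^ p * (((lm.2 + 1 : ℕ) : ℂ)) ^ s *
          (((lm.1 + (lm.2 : ℤ) + 1 : ℤ) : ℂ)) ^ q)
    else 0

/-- Generic triple zeta-sum of type `A₃` with a weight `w` on `(l,m,n)`. -/
noncomputable def Z3 (w : ℕ → ℕ → ℕ → ℂ) (s₁ s₂ s₃ s₄ s₅ s₆ : ℂ) : ℂ :=
  ∑' t : ℕ × ℕ × ℕ,
    w (t.1 + 1) (t.2.1 + 1) (t.2.2 + 1) /
      ((((t.1 + 1 : ℕ) : ℂ)) ^ s₁ * (((t.2.1 + 1 : ℕ) : ℂ)) ^ s₂ *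
        (((t.2.2 + 1 : ℕ) : ℂ)) ^ s₃ * (((t.1 + 1 + (t.2.1 + 1) : ℕ) : ℂ)) ^ s₄ *
        (((t.2.1 + 1 + (t.2.2 + 1) : ℕ) : ℂ)) ^ s₅ *
        (((t.1 + 1 + (t.2.1 + 1) + (t.2.2 + 1) : ℕ) : ℂ)) ^ s₆)

/-- `ζ₃(s₁,…,s₆,λ₁∨;SU(4))`, with numerator `i^{3l+2m+n}`. -/
noncomputable def Zlam1 : ℂ → ℂ → ℂ → ℂ → ℂ → ℂ → ℂ :=
  Z3 (fun l m n => Complex.I ^ (3 * l + 2 * m + n))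

/-- The twelve-term alternating combination `S` built from a six-variable zeta `Z`. -/
noncomputable def Scomb (Z : ℂ → ℂ → ℂ → ℂ → ℂ → ℂ → ℂ) (p q a b c : ℕ) (s : ℂ) : ℂ :=
  Z p q s a b c + (-1 : ℂ) ^ p * Z p a s q c b + (-1 : ℂ) ^ (p + a) * Z q a c p s b +
    (-1 : ℂ) ^ (p + a + c) * Z q s c b a p + (-1 : ℂ) ^ q * Z a q b p s c +
    (-1 : ℂ) ^ (q + b) * Z a s b c q p + (-1 : ℂ) ^ (q + a) * Z a p b q c s +
    (-1 : ℂ) ^ (q + a + b) * Z a c b s p q + (-1 : ℂ) ^ (q + a + b + c) * Z s c p a b q +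
    (-1 : ℂ) ^ (p + q + a) * Z q p c a b s + (-1 : ℂ) ^ (p + q + a + c) * Z q b c s p a +
    (-1 : ℂ) ^ (p + q + a + b + c) * Z s b p q c a

/-- The right-hand side `J₁` of the functional relation for `ζ₃(·,λ₁∨;SU(4))`. -/
noncomputable def J1 (p q a b c : ℕ) (s : ℂ) : ℂ :=
  (-1 : ℂ) ^ p * ∑ j ∈ range (p + 1), (-1 : ℂ) ^ j * LamNegI j *
      ∑ ω ∈ range (p - j + 1),
        (Nat.choose (ω + a - 1) ω : ℂ) * (Nat.choose (p + c - j - ω - 1) (c - 1) : ℂ) *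
          T (q + a + ω) s (p + b + c - j - ω) (-1) Complex.I +
  (-1 : ℂ) ^ (p + a) * ∑ j ∈ range (c + 1), LamNegI j *
      ∑ ω ∈ range (c - j + 1),
        (Nat.choose (ω + a - 1) ω : ℂ) * (Nat.choose (p + c - j - ω - 1) (p - 1) : ℂ) *
          T q (s + a + ω) (p + b + c - j - ω) (-Complex.I) (-1) +
  (-1 : ℂ) ^ p * ∑ j ∈ range (a + 1), LamNegI j *
      ∑ ω ∈ range p,
        (Nat.choose (ω + a - j) ω : ℂ) * (Nat.choose (p + c - 2 - ω) (c - 1) : ℂ) *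
          T (q + a - j + ω + 1) s (p + b + c - 1 - ω) (-Complex.I) Complex.I +
  (-1 : ℂ) ^ (p + a) * ∑ j ∈ range (a + 1), (-1 : ℂ) ^ j * LamNegI j *
      ∑ ω ∈ range c,
        (Nat.choose (ω + a - j) ω : ℂ) * (Nat.choose (p + c - 2 - ω) (p - 1) : ℂ) *
          T q (s + ((a - j : ℕ) : ℂ) + ω + 1) (p + b + c - 1 - ω) (-Complex.I) Complex.I


/-! ### Partial fractions -/

lemma sf_A (x : ℂ) (c p : ℕ) :
    (1 - x) * ∑ k ∈ range (p + 1), (Nat.choose (c + 1 + k) k : ℂ) * x ^ k =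
      ∑ k ∈ range (p + 1), (Nat.choose (c + k) k : ℂ) * x ^ k -
        (Nat.choose (c + 1 + p) p : ℂ) * x ^ (p + 1) := by
  induction p with
  | zero => simp
  | succ p ih =>
    rw [sum_range_succ, mul_add, ih, sum_range_succ _ (p + 1)]
    have h : Nat.choose (c + 1 + (p + 1)) (p + 1) =
        Nat.choose (c + 1 + p) p + Nat.choose (c + (p + 1)) (p + 1) := by
      have := Nat.choose_succ_succ (c + 1 + p) p
      rw [show c + (p + 1) = c + 1 + p by ring, ← this]
      congr 1
    rw [h]
    push_cast
    ring

lemma sf_CB (x y : ℂ) (h : x + y = 1) (p c : ℕ) :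
    y ^ (c + 1) * ∑ k ∈ range (p + 1), (Nat.choose (c + k) k : ℂ) * x ^ k +
      x ^ (p + 1) * ∑ k ∈ range (c + 1), (Nat.choose (p + k) k : ℂ) * y ^ k = 1 := by
  have hy : y = 1 - x := by linear_combination h
  induction c with
  | zero =>
    simp only [zero_add, Nat.choose_self, Nat.cast_one, one_mul, pow_one, range_one, sum_singleton,
      add_zero, Nat.choose_zero_right, pow_zero, mul_one]
    rw [hy, mul_neg_geom_sum]
    ring
  | succ c ih =>
    rw [sum_range_succ _ (c + 1)]
    have h1 := sf_A x c p
    rw [← hy] at h1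
    have h2 : (Nat.choose (p + (c + 1)) (c + 1) : ℂ) = Nat.choose (c + 1 + p) p := by
      rw [Nat.add_comm p (c + 1), Nat.choose_symm_add]
    rw [h2]
    linear_combination ih + y ^ (c + 1) * h1

lemma sf_hock (p c : ℕ) :
    ∑ k ∈ range (c + 1), (Nat.choose (p + k) k : ℂ) = Nat.choose (p + 1 + c) c := by
  have := sf_A 1 p c
  simp at this
  linear_combination -this

/-- `δ_j(x)`: equals `x^{-j}` for `j ≥ 1` (zero at `x = 0`), and minus the delta for `j = 0`. -/
noncomputable def dl (j : ℕ) (x : ℤ) : ℂ :=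
  if j = 0 then (if x = 0 then -1 else 0) else ((x : ℂ) ^ j)⁻¹

lemma dl_zero_of_ne {x : ℤ} (hx : x ≠ 0) : dl 0 x = 0 := by simp [dl, hx]
lemma dl_zero_zero : dl 0 0 = -1 := by simp [dl]
lemma dl_pos {j : ℕ} (hj : j ≠ 0) (x : ℤ) : dl j x = ((x : ℂ) ^ j)⁻¹ := by simp [dl, hj]
lemma dl_pos_zero {j : ℕ} (hj : j ≠ 0) : dl j 0 = 0 := by simp [dl, hj]

lemma sf_G0 (p a : ℕ) (m : ℤ) (hm : m ≠ 0) (l : ℤ) :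
    dl (p + 1) l * dl (a + 1) (l + m) =
      ∑ k ∈ range (p + 2), (-1 : ℂ) ^ k * (Nat.choose (a + k) k : ℂ) *
        ((m : ℂ) ^ (a + 1 + k))⁻¹ * dl (p + 1 - k) l +
      ∑ k ∈ range (a + 2), (-1 : ℂ) ^ (p + 1) * (Nat.choose (p + k) k : ℂ) *
        ((m : ℂ) ^ (p + 1 + k))⁻¹ * dl (a + 1 - k) (l + m) := by
  have hm' : (m : ℂ) ≠ 0 := by exact_mod_cast hm
  rw [sum_range_succ _ (p + 1), sum_range_succ _ (a + 1)]
  simp only [Nat.sub_self]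
  have e1 : ∀ (x : ℤ), ∀ k ∈ range (p + 1), dl (p + 1 - k) x = ((x : ℂ) ^ (p + 1 - k))⁻¹ := by
    intro x k hk
    rw [dl_pos]
    have := mem_range.1 hk
    omega
  have e2 : ∀ (x : ℤ), ∀ k ∈ range (a + 1), dl (a + 1 - k) x = ((x : ℂ) ^ (a + 1 - k))⁻¹ := by
    intro x k hk
    rw [dl_pos]
    have := mem_range.1 hk
    omega
  by_cases hl : l = 0
  · subst hl
    rw [dl_pos_zero (Nat.succ_ne_zero p), zero_add, dl_zero_zero, dl_zero_of_ne hm]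
    have e3 : ∑ k ∈ range (p + 1), (-1 : ℂ) ^ k * (Nat.choose (a + k) k : ℂ) *
        ((m : ℂ) ^ (a + 1 + k))⁻¹ * dl (p + 1 - k) 0 = 0 := by
      refine sum_eq_zero fun k hk => ?_
      have := mem_range.1 hk
      rw [dl_pos_zero (by omega), mul_zero]
    have e4 : ∑ k ∈ range (a + 1), (-1 : ℂ) ^ (p + 1) * (Nat.choose (p + k) k : ℂ) *
        ((m : ℂ) ^ (p + 1 + k))⁻¹ * dl (a + 1 - k) m =
        (-1 : ℂ) ^ (p + 1) * ((m : ℂ) ^ (a + 1 + (p + 1)))⁻¹ *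
          ∑ k ∈ range (a + 1), (Nat.choose (p + k) k : ℂ) := by
      rw [mul_sum]
      refine sum_congr rfl fun k hk => ?_
      rw [e2 m k hk]
      have := mem_range.1 hk
      rw [show a + 1 + (p + 1) = (p + 1 + k) + (a + 1 - k) by omega, pow_add (m : ℂ) (p + 1 + k), mul_inv]
      ring
    rw [e3, e4, sf_hock]
    have h2 : (Nat.choose (a + (p + 1)) (p + 1) : ℂ) = Nat.choose (p + 1 + a) a := by
      rw [Nat.add_comm a (p + 1), Nat.choose_symm_add]
    rw [h2]
    ring
  by_cases hl2 : l + m = 0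
  · have hl3 : l = -m := by omega
    rw [hl2, dl_pos_zero (Nat.succ_ne_zero a), dl_zero_zero, dl_zero_of_ne hl]
    have e3 : ∑ k ∈ range (a + 1), (-1 : ℂ) ^ (p + 1) * (Nat.choose (p + k) k : ℂ) *
        ((m : ℂ) ^ (p + 1 + k))⁻¹ * dl (a + 1 - k) 0 = 0 := by
      refine sum_eq_zero fun k hk => ?_
      have := mem_range.1 hk
      rw [dl_pos_zero (by omega), mul_zero]
    have e4 : ∑ k ∈ range (p + 1), (-1 : ℂ) ^ k * (Nat.choose (a + k) k : ℂ) *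
        ((m : ℂ) ^ (a + 1 + k))⁻¹ * dl (p + 1 - k) l =
        (-1 : ℂ) ^ (p + 1) * ((m : ℂ) ^ (a + 1 + (p + 1)))⁻¹ *
          ∑ k ∈ range (p + 1), (Nat.choose (a + k) k : ℂ) := by
      rw [mul_sum]
      refine sum_congr rfl fun k hk => ?_
      rw [e1 l k hk]
      have := mem_range.1 hk
      rw [show a + 1 + (p + 1) = (a + 1 + k) + (p + 1 - k) by omega, pow_add (m : ℂ) (a + 1 + k), mul_inv, hl3]
      push_cast
      rw [neg_pow (m : ℂ), mul_inv]
      have h5 : (-1 : ℂ) ^ (p + 1) = (-1) ^ k * (-1) ^ (p + 1 - k) := by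
        rw [← pow_add]; congr 1; omega
      have h6 : ((-1 : ℂ) ^ (p + 1 - k))⁻¹ = (-1) ^ (p + 1 - k) := by
        rw [← inv_pow]; norm_num
      rw [h5, h6]
      ring
    rw [e3, e4, sf_hock]
    have h2 : (Nat.choose (p + (a + 1)) (a + 1) : ℂ) = Nat.choose (a + 1 + p) p := by
      rw [Nat.add_comm p (a + 1), Nat.choose_symm_add]
    rw [h2]
    ring
  · rw [dl_zero_of_ne hl, dl_zero_of_ne hl2, dl_pos (Nat.succ_ne_zero _), dl_pos (Nat.succ_ne_zero _)]
    have hX : (l : ℂ) ≠ 0 := by exact_mod_cast hl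
    have hY : ((l + m : ℤ) : ℂ) ≠ 0 := by exact_mod_cast hl2
    set X : ℂ := (l : ℂ) with hXd
    set Y : ℂ := ((l + m : ℤ) : ℂ) with hYd
    have hD : Y - X = m := by rw [hYd, hXd]; push_cast; ring
    set D : ℂ := (m : ℂ) with hDd
    have key := sf_CB (-X / D) (Y / D) (by rw [← hD] at hm' ⊢; field_simp; ring) p a
    have f1 : ∑ k ∈ range (p + 1), (-1 : ℂ) ^ k * (Nat.choose (a + k) k : ℂ) *
        (D ^ (a + 1 + k))⁻¹ * dl (p + 1 - k) l =
        (X ^ (p + 1))⁻¹ * (Y ^ (a + 1))⁻¹ * ((Y / D) ^ (a + 1) *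
          ∑ k ∈ range (p + 1), (Nat.choose (a + k) k : ℂ) * (-X / D) ^ k) := by
      rw [mul_sum, mul_sum]
      refine sum_congr rfl fun k hk => ?_
      rw [e1 l k hk]
      have := mem_range.1 hk
      have hx : X ^ (p + 1) = X ^ (p + 1 - k) * X ^ k := by
        rw [← pow_add]; congr 1; omega
      rw [hx, ← hXd, div_pow, div_pow, neg_pow X, pow_add D (a + 1)]
      field_simp
    have f2 : ∑ k ∈ range (a + 1), (-1 : ℂ) ^ (p + 1) * (Nat.choose (p + k) k : ℂ) *
        (D ^ (p + 1 + k))⁻¹ * dl (a + 1 - k) (l + m) =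
        (X ^ (p + 1))⁻¹ * (Y ^ (a + 1))⁻¹ * ((-X / D) ^ (p + 1) *
          ∑ k ∈ range (a + 1), (Nat.choose (p + k) k : ℂ) * (Y / D) ^ k) := by
      rw [mul_sum, mul_sum]
      refine sum_congr rfl fun k hk => ?_
      rw [e2 (l + m) k hk]
      have := mem_range.1 hk
      rw [← hYd]
      have hx : Y ^ (a + 1) = Y ^ (a + 1 - k) * Y ^ k := by
        rw [← pow_add]; congr 1; omega
      rw [hx, div_pow, div_pow, neg_pow X, pow_add D (p + 1)]
      field_simp
    rw [f1, f2, Nat.succ_eq_add_one, Nat.succ_eq_add_one]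
    linear_combination -(X ^ (p + 1))⁻¹ * (Y ^ (a + 1))⁻¹ * key

lemma sf_G (p a : ℕ) (ha : 0 < a) (m : ℤ) (hm : m ≠ 0) (l : ℤ) :
    dl p l * dl a (l + m) =
      ∑ j ∈ range (p + 1), (-1 : ℂ) ^ (p - j) * (Nat.choose ((p - j) + a - 1) (p - j) : ℂ) *
        ((m : ℂ) ^ (a + (p - j)))⁻¹ * dl j l +
      if p = 0 then 0 else
      ∑ j ∈ range (a + 1), (-1 : ℂ) ^ p * (Nat.choose (p - 1 + (a - j)) (p - 1) : ℂ) *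
        ((m : ℂ) ^ (p + (a - j)))⁻¹ * dl j (l + m) := by
  obtain ⟨a, rfl⟩ : ∃ a', a = a' + 1 := ⟨a - 1, by omega⟩
  rcases p with _ | p
  · simp only [zero_add, range_one, sum_singleton, Nat.sub_self, pow_zero, Nat.choose_zero_right,
      Nat.cast_one, one_mul, add_zero, if_true]
    by_cases hl : l = 0
    · subst hl
      rw [dl_zero_zero, dl_pos (Nat.succ_ne_zero _)]
      simp
    · rw [dl_zero_of_ne hl]; simp
  · rw [sf_G0 p a m hm l, if_neg (Nat.succ_ne_zero p)]
    rw [← sum_flip, ← sum_flip (n := a + 1)]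
    congr 1
    · refine sum_congr rfl fun j hj => ?_
      have := mem_range.1 hj
      rw [show p + 1 - (p + 1 - j) = j by omega,
        show p + 1 - j + (a + 1) - 1 = a + (p + 1 - j) by omega]
    · refine sum_congr rfl fun j hj => ?_
      have := mem_range.1 hj
      rw [show a + 1 - (a + 1 - j) = j by omega, show p + 1 - 1 = p by omega]
      rw [Nat.choose_symm_add]

lemma sf_comb (p a : ℕ) (α β : ℕ → ℂ) (γ : ℕ → ℕ → ℂ) (u w : ℕ → ℂ) :
    ∑ i ∈ range (p + 1), α i * (∑ j ∈ range (i + 1), β (i - j) * u j +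
      if i = 0 then 0 else ∑ j ∈ range (a + 1), γ i j * w j) =
    ∑ j ∈ range (p + 1), (∑ ω ∈ range (p - j + 1), α (j + ω) * β ω) * u j +
      ∑ j ∈ range (a + 1), (∑ ω ∈ range p, α (ω + 1) * γ (ω + 1) j) * w j := by
  simp only [mul_add, sum_add_distrib]
  congr 1
  · have h := sum_range_diag_flip (p + 1) (fun j ω => α (j + ω) * β ω * u j)
    have h1 : ∑ i ∈ range (p + 1), α i * ∑ j ∈ range (i + 1), β (i - j) * u j =
        ∑ m ∈ range (p + 1), ∑ k ∈ range (m + 1), α (k + (m - k)) * β (m - k) * u k := by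
      refine sum_congr rfl fun i _ => ?_
      rw [mul_sum]
      refine sum_congr rfl fun j hj => ?_
      have := mem_range.1 hj
      rw [show j + (i - j) = i by omega]
      ring
    rw [h1, h]
    refine sum_congr rfl fun j hj => ?_
    have := mem_range.1 hj
    rw [sum_mul, show p + 1 - j = p - j + 1 by omega]
  · rw [sum_range_succ']
    simp only [Nat.succ_ne_zero, if_false, if_true, mul_zero, add_zero]
    simp only [mul_sum, sum_mul]
    rw [sum_comm]
    simp only [mul_assoc]

/-- coefficients of the four families -/
noncomputable def cf1 (p a c : ℕ) (m D : ℂ) (j : ℕ) : ℂ :=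
  ∑ ω ∈ range (p - j + 1), (-1 : ℂ) ^ p * (-1 : ℂ) ^ j * (Nat.choose (ω + a - 1) ω : ℂ) *
    (Nat.choose (p + c - j - ω - 1) (c - 1) : ℂ) * ((m ^ (a + ω))⁻¹ * (D ^ (p + c - j - ω))⁻¹)

noncomputable def cf2 (p a c : ℕ) (n D : ℂ) (j : ℕ) : ℂ :=
  ∑ ω ∈ range (c - j + 1), (-1 : ℂ) ^ (p + a) * (Nat.choose (ω + a - 1) ω : ℂ) *
    (Nat.choose (p + c - j - ω - 1) (p - 1) : ℂ) * ((n ^ (a + ω))⁻¹ * (D ^ (p + c - j - ω))⁻¹)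

noncomputable def cf3 (p a c : ℕ) (m D : ℂ) (j : ℕ) : ℂ :=
  ∑ ω ∈ range p, (-1 : ℂ) ^ p * (Nat.choose (ω + a - j) ω : ℂ) *
    (Nat.choose (p + c - 2 - ω) (c - 1) : ℂ) *
      ((m ^ (a - j + ω + 1))⁻¹ * (D ^ (p + c - 1 - ω))⁻¹)

noncomputable def cf4 (p a c : ℕ) (n D : ℂ) (j : ℕ) : ℂ :=
  ∑ ω ∈ range c, (-1 : ℂ) ^ (p + a) * (-1 : ℂ) ^ j * (Nat.choose (ω + a - j) ω : ℂ) *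
    (Nat.choose (p + c - 2 - ω) (p - 1) : ℂ) *
      ((n ^ (a - j + ω + 1))⁻¹ * (D ^ (p + c - 1 - ω))⁻¹)

lemma sf_neg_one_pow_congr {i j : ℕ} (h : i % 2 = j % 2) : (-1 : ℂ) ^ i = (-1) ^ j := by
  rw [neg_one_pow_eq_pow_mod_two, h, ← neg_one_pow_eq_pow_mod_two]

lemma neg_pow_inv' (n : ℂ) (k : ℕ) : ((-n) ^ k)⁻¹ = (-1) ^ k * (n ^ k)⁻¹ := by
  rw [neg_pow, mul_inv, ← inv_pow]; norm_num

lemma sf_pf (p a c : ℕ) (hp : 0 < p) (ha : 0 < a) (hc : 0 < c) (m n : ℤ) (hm : m ≠ 0) (hn : n ≠ 0)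
    (hmn : m + n ≠ 0) (l : ℤ) :
    dl p l * dl a (l + m) * dl c (l + m + n) =
      ∑ j ∈ range (p + 1), cf1 p a c m ((m + n : ℤ) : ℂ) j * dl j l +
      ∑ j ∈ range (c + 1), cf2 p a c n ((m + n : ℤ) : ℂ) j * dl j (l + m + n) +
      ∑ j ∈ range (a + 1), cf3 p a c m ((m + n : ℤ) : ℂ) j * dl j (l + m) +
      ∑ j ∈ range (a + 1), cf4 p a c n ((m + n : ℤ) : ℂ) j * dl j (l + m) := by
  have h1 := sf_G p c hc (m + n) hmn l
  rw [if_neg hp.ne', ← add_assoc l m n] at h1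
  have h2 := fun j => sf_G j a ha m hm l
  have h3 := fun j => sf_G j a ha (-n) (neg_ne_zero.2 hn) (l + m + n)
  simp only [show l + m + n + -n = l + m by ring] at h3
  rw [mul_right_comm, h1, add_mul, sum_mul, sum_mul]
  set D : ℂ := ((m + n : ℤ) : ℂ)
  have k1 := sf_comb p a
    (fun i => (-1 : ℂ) ^ (p - i) * (Nat.choose ((p - i) + c - 1) (p - i) : ℂ) *
        (D ^ (c + (p - i)))⁻¹)
    (fun d => (-1 : ℂ) ^ d * (Nat.choose (d + a - 1) d : ℂ) * ((m : ℂ) ^ (a + d))⁻¹)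
    (fun i j => (-1 : ℂ) ^ i * (Nat.choose (i - 1 + (a - j)) (i - 1) : ℂ) *
        ((m : ℂ) ^ (i + (a - j)))⁻¹) (fun j => dl j l) (fun j => dl j (l + m))
  have k2 := sf_comb c a
    (fun i => (-1 : ℂ) ^ p * (Nat.choose (p - 1 + (c - i)) (p - 1) : ℂ) *
        (D ^ (p + (c - i)))⁻¹)
    (fun d => (-1 : ℂ) ^ d * (Nat.choose (d + a - 1) d : ℂ) * (((-n : ℤ) : ℂ) ^ (a + d))⁻¹)
    (fun i j => (-1 : ℂ) ^ i * (Nat.choose (i - 1 + (a - j)) (i - 1) : ℂ) *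
        (((-n : ℤ) : ℂ) ^ (i + (a - j)))⁻¹) (fun j => dl j (l + m + n)) (fun j => dl j (l + m))
  have l1 : ∑ i ∈ range (p + 1), (-1 : ℂ) ^ (p - i) * (Nat.choose ((p - i) + c - 1) (p - i) : ℂ) *
        (D ^ (c + (p - i)))⁻¹ * dl i l * dl a (l + m) =
      ∑ j ∈ range (p + 1), cf1 p a c m D j * dl j l +
      ∑ j ∈ range (a + 1), cf3 p a c m D j * dl j (l + m) := by
    simp only [mul_assoc _ (dl _ l) (dl a (l + m)), h2]
    rw [k1]
    congr 1
    · refine sum_congr rfl fun j hj => ?_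
      have hj := mem_range.1 hj
      congr 1
      refine sum_congr rfl fun ω hω => ?_
      have hω := mem_range.1 hω
      have e1 : Nat.choose ((p - (j + ω)) + c - 1) (p - (j + ω)) =
          Nat.choose (p + c - j - ω - 1) (c - 1) := by
        rw [show p + c - j - ω - 1 = (p - (j + ω)) + c - 1 by omega]
        rw [← Nat.choose_symm (by omega)]
        congr 1; omega
      have e2 : (-1 : ℂ) ^ p * (-1 : ℂ) ^ j = (-1) ^ (p - (j + ω)) * (-1) ^ ω := by
        rw [← pow_add, ← pow_add]; exact sf_neg_one_pow_congr (by omega)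
      rw [e1, e2, show c + (p - (j + ω)) = p + c - j - ω by omega]
      ring
    · refine sum_congr rfl fun j hj => ?_
      have hj := mem_range.1 hj
      congr 1
      refine sum_congr rfl fun ω hω => ?_
      have hω := mem_range.1 hω
      have e1 : Nat.choose ((p - (ω + 1)) + c - 1) (p - (ω + 1)) =
          Nat.choose (p + c - 2 - ω) (c - 1) := by
        rw [show p + c - 2 - ω = (p - (ω + 1)) + c - 1 by omega]
        rw [← Nat.choose_symm (by omega)]
        congr 1; omega
      have e2 : (-1 : ℂ) ^ p = (-1) ^ (p - (ω + 1)) * (-1) ^ (ω + 1) := by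
        rw [← pow_add]; exact sf_neg_one_pow_congr (by omega)
      rw [e1, e2, show c + (p - (ω + 1)) = p + c - 1 - ω by omega,
        show ω + 1 - 1 + (a - j) = ω + a - j by omega, show ω + 1 - 1 = ω by omega,
        show ω + 1 + (a - j) = a - j + ω + 1 by omega]
      ring
  have l2 : ∑ i ∈ range (c + 1), (-1 : ℂ) ^ p * (Nat.choose (p - 1 + (c - i)) (p - 1) : ℂ) *
        (D ^ (p + (c - i)))⁻¹ * dl i (l + m + n) * dl a (l + m) =
      ∑ j ∈ range (c + 1), cf2 p a c n D j * dl j (l + m + n) +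
      ∑ j ∈ range (a + 1), cf4 p a c n D j * dl j (l + m) := by
    simp only [mul_assoc _ (dl _ (l + m + n)) (dl a (l + m)), h3]
    rw [k2]
    congr 1
    · refine sum_congr rfl fun j hj => ?_
      have hj := mem_range.1 hj
      congr 1
      refine sum_congr rfl fun ω hω => ?_
      have hω := mem_range.1 hω
      rw [Int.cast_neg, neg_pow_inv', show p - 1 + (c - (j + ω)) = p + c - j - ω - 1 by omega,
        show p + (c - (j + ω)) = p + c - j - ω by omega]
      have e2 : (-1 : ℂ) ^ (p + a) = (-1) ^ p * (-1) ^ ω * (-1) ^ (a + ω) := by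
        rw [← pow_add, ← pow_add]; exact sf_neg_one_pow_congr (by omega)
      rw [e2]
      ring
    · refine sum_congr rfl fun j hj => ?_
      have hj := mem_range.1 hj
      congr 1
      refine sum_congr rfl fun ω hω => ?_
      have hω := mem_range.1 hω
      have e2 : (-1 : ℂ) ^ (p + a) * (-1) ^ j =
          (-1) ^ p * (-1) ^ (ω + 1) * (-1) ^ (ω + 1 + (a - j)) := by
        rw [← pow_add, ← pow_add, ← pow_add]; exact sf_neg_one_pow_congr (by omega)
      rw [Int.cast_neg, neg_pow_inv', show p - 1 + (c - (ω + 1)) = p + c - 2 - ω by omega, e2,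
        show p + (c - (ω + 1)) = p + c - 1 - ω by omega,
        show ω + 1 - 1 + (a - j) = ω + a - j by omega, show ω + 1 - 1 = ω by omega,
        show ω + 1 + (a - j) = a - j + ω + 1 by omega]
      ring
  rw [l1, l2]
  ring

lemma HasSum.congr_fun' {β : Type*} {f g : β → ℂ} {v : ℂ} (h : HasSum f v) (hfg : ∀ x, g x = f x) :
    HasSum g v := by
  rwa [show g = f from funext hfg]

lemma HasSum.congr_val {β : Type*} {f : β → ℂ} {v w : ℂ} (h : HasSum f v) (hvw : w = v) :
    HasSum f w := hvw ▸ h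

/-! ### Regularised sums -/

/-- `g` has regularised sum `v` over the integers. -/
def RS (g : ℤ → ℂ) (v : ℂ) : Prop := HasSum (fun l => g l + g (l + 2)) (2 * v)

lemma RS.unique {g : ℤ → ℂ} {v w : ℂ} (h1 : RS g v) (h2 : RS g w) : v = w := by
  have := HasSum.unique h1 h2
  linear_combination this / 2

lemma RS.shift {g : ℤ → ℂ} {v : ℂ} (h : RS g v) (x : ℤ) : RS (fun l => g (l + x)) v := by
  have := (Equiv.addRight x).hasSum_iff.2 h
  refine this.congr_fun' ?_
  intro l
  simp [add_right_comm]

lemma RS.of_hasSum {g : ℤ → ℂ} {v : ℂ} (h : HasSum g v) : RS g v := by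
  unfold RS
  rw [two_mul]
  exact h.add ((Equiv.addRight (2 : ℤ)).hasSum_iff.2 h)

lemma RS.add {g g' : ℤ → ℂ} {v v' : ℂ} (h : RS g v) (h' : RS g' v') :
    RS (fun l => g l + g' l) (v + v') := by
  unfold RS at *
  rw [mul_add]
  refine (HasSum.add h h').congr_fun' ?_
  intro l
  ring

lemma RS.mul_left {g : ℤ → ℂ} {v : ℂ} (h : RS g v) (x : ℂ) :
    RS (fun l => x * g l) (x * v) := by
  unfold RS at *
  have := HasSum.mul_left x h
  rw [mul_left_comm] at this
  simpa only [mul_add] using this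

lemma RS.sum {ι : Type*} (s : Finset ι) {g : ι → ℤ → ℂ} {v : ι → ℂ} (h : ∀ i ∈ s, RS (g i) (v i)) :
    RS (fun l => ∑ i ∈ s, g i l) (∑ i ∈ s, v i) := by
  unfold RS at *
  rw [mul_sum]
  simp only [← sum_add_distrib]
  exact hasSum_sum h

lemma chi4_nat (n : ℕ) : chi4 (n : ZMod 4) =
    if n % 2 = 0 then 0 else if n % 4 = 1 then 1 else -1 := by
  have := ZMod.χ₄_nat_eq_if_mod_four n
  simp only [chi4, MulChar.ringHomComp_apply, this]
  split_ifs <;> simp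

lemma negI_pow_mod (n : ℕ) : (-I) ^ n = (-I) ^ (n % 4) := by
  conv_lhs => rw [← Nat.div_add_mod n 4, pow_add, pow_mul]
  have : (-I) ^ 4 = 1 := by rw [neg_pow, I_pow_four]; norm_num
  rw [this, one_pow, one_mul]

lemma negI_inv : (-I)⁻¹ = I := by rw [inv_neg, inv_I, neg_neg]

lemma I_pow_mod' (n : ℕ) : I ^ n = I ^ (n % 4) := I_pow_eq_pow_mod n

lemma negI_sub (n : ℕ) : (-I) ^ (n : ℤ) - (-I) ^ (-(n : ℤ)) = -(2 * I) * chi4 (n : ZMod 4) := by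
  rw [zpow_neg, zpow_natCast, ← inv_pow, negI_inv, negI_pow_mod, I_pow_mod', chi4_nat]
  have h : n % 4 = 0 ∨ n % 4 = 1 ∨ n % 4 = 2 ∨ n % 4 = 3 := by omega
  have h2 : n % 2 = (n % 4) % 2 := by omega
  rw [h2]
  rcases h with h | h | h | h <;> rw [h]
  · simp
  · simp; ring
  · simp
  · simp only [pow_succ, pow_zero, one_mul]
    norm_num
    ring

lemma negI_add (n : ℕ) : (-I) ^ (n : ℤ) + (-I) ^ (-(n : ℤ)) =
    4 * (if 4 ∣ n then 1 else 0) - 2 * (if 2 ∣ n then 1 else 0) := by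
  rw [zpow_neg, zpow_natCast, ← inv_pow, negI_inv, negI_pow_mod, I_pow_mod']
  have h : n % 4 = 0 ∨ n % 4 = 1 ∨ n % 4 = 2 ∨ n % 4 = 3 := by omega
  have h2 : 2 ∣ n ↔ (n % 4) % 2 = 0 := by omega
  have h3 : 4 ∣ n ↔ (n % 4) = 0 := by omega
  simp only [h2, h3]
  rcases h with h | h | h | h <;> rw [h]
  · norm_num
  · simp
  · simp; norm_num
  · simp only [pow_succ, pow_zero, one_mul]
    norm_num

lemma hasSum_zeta_dvd (d k : ℕ) (hd : 0 < d) (hk : 1 < k) :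
    HasSum (fun n : ℕ => (if d ∣ n then (1 : ℂ) else 0) * ((n : ℂ) ^ k)⁻¹)
      (((d : ℂ) ^ k)⁻¹ * riemannZeta k) := by
  have h1 : HasSum (fun n : ℕ => ((n : ℂ) ^ k)⁻¹) (riemannZeta k) := by
    rw [zeta_nat_eq_tsum_of_gt_one hk]
    simp only [one_div]
    refine Summable.hasSum ?_
    refine Summable.of_norm ?_
    simpa using (Real.summable_nat_pow_inv.2 hk)
  have h2 := h1.mul_left (((d : ℂ) ^ k)⁻¹)
  have hinj : Function.Injective (fun n : ℕ => d * n) := fun a b h => Nat.eq_of_mul_eq_mul_left hd h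
  refine (hinj.hasSum_iff ?_).1 ?_
  · intro x hx
    have : ¬ d ∣ x := by
      rintro ⟨y, rfl⟩
      exact hx ⟨y, rfl⟩
    simp [this]
  · refine h2.congr_fun' ?_
    intro n
    simp [mul_pow, mul_comm]

lemma norm_negI_zpow (l : ℤ) : ‖(-I) ^ l‖ = 1 := by simp

lemma summable_int_negI (k : ℕ) (hk : 1 < k) :
    Summable (fun l : ℤ => (-I) ^ l * ((l : ℂ) ^ k)⁻¹) := by
  refine Summable.of_norm ?_
  have := (Real.summable_one_div_int_pow (p := k)).2 hk
  refine this.abs.congr ?_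
  intro l
  rw [norm_mul, norm_negI_zpow, one_mul, norm_inv, norm_pow, abs_div, abs_one, abs_pow, one_div,
    Complex.norm_intCast]

lemma RS_even (k : ℕ) (hk : 1 < k) (he : Even k) :
    RS (fun l : ℤ => (-I) ^ l * ((l : ℂ) ^ k)⁻¹) (LamNegI k) := by
  refine RS.of_hasSum ?_
  have h := (summable_int_negI k hk).hasSum
  have h1 := h.nat_add_neg
  have h2 := ((hasSum_zeta_dvd 4 k (by norm_num) hk).mul_left 4).sub
    ((hasSum_zeta_dvd 2 k (by norm_num) hk).mul_left 2)
  have h3 : (fun n : ℕ => (-I) ^ (n : ℤ) * (((n : ℤ) : ℂ) ^ k)⁻¹ +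
      (-I) ^ (-(n : ℤ)) * (((-(n : ℤ) : ℤ) : ℂ) ^ k)⁻¹) = fun n : ℕ =>
      4 * ((if 4 ∣ n then (1 : ℂ) else 0) * ((n : ℂ) ^ k)⁻¹) -
      2 * ((if 2 ∣ n then (1 : ℂ) else 0) * ((n : ℂ) ^ k)⁻¹) := by
    funext n
    push_cast
    rw [he.neg_pow]
    linear_combination ((n : ℂ) ^ k)⁻¹ * negI_add n
  rw [h3] at h1
  have h4 := h1.unique h2
  have h5 : LamNegI k = ∑' l : ℤ, (-I) ^ l * ((l : ℂ) ^ k)⁻¹ := by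
    have hk0 : k ≠ 0 := by omega
    simp only [Int.cast_zero, ne_eq, hk0, not_false_eq_true, zero_pow, inv_zero, mul_zero,
      add_zero] at h4
    rw [h4, LamNegI, if_pos he]
    rw [zpow_sub₀ two_ne_zero, zpow_one, zpow_natCast]
    have : ((4 : ℕ) : ℂ) ^ k = 2 ^ k * 2 ^ k := by rw [← mul_pow]; norm_num
    rw [this]
    push_cast
    field_simp
    ring
  rw [h5]
  exact h

/-- terms of the Dirichlet series of `χ₄` -/
noncomputable def K4 (s : ℂ) (n : ℕ) : ℂ := LSeries.term (fun n : ℕ => chi4 (n : ZMod 4)) s n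

lemma K4_zero (s : ℂ) : K4 s 0 = 0 := by simp [K4]

lemma K4_eq (s : ℂ) (n : ℕ) (hn : n ≠ 0) : K4 s n = chi4 (n : ZMod 4) / (n : ℂ) ^ s := by
  simp [K4, LSeries.term, hn]

lemma K4_one (s : ℂ) : K4 s 1 = 1 := by
  rw [K4_eq s 1 one_ne_zero, chi4_nat]; simp

lemma K4_two (s : ℂ) : K4 s 2 = 0 := by
  rw [K4_eq s 2 two_ne_zero, chi4_nat]; simp

lemma K4_nat (k n : ℕ) (hk : k ≠ 0) : K4 k n = chi4 (n : ZMod 4) * ((n : ℂ) ^ k)⁻¹ := by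
  rcases eq_or_ne n 0 with rfl | hn
  · rw [K4_zero]; simp [hk]
  · rw [K4_eq _ _ hn, cpow_natCast, div_eq_mul_inv]

lemma hasSum_K4 (s : ℂ) (hs : 1 < s.re) : HasSum (K4 s) (Lchi4 s) := by
  rw [Lchi4, DirichletCharacter.LFunction_eq_LSeries _ hs]
  exact (DirichletCharacter.LSeriesSummable_of_one_lt_re chi4 hs).LSeriesHasSum

lemma RS_odd (k : ℕ) (hk : 1 < k) (he : ¬ Even k) :
    RS (fun l : ℤ => (-I) ^ l * ((l : ℂ) ^ k)⁻¹) (LamNegI k) := by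
  refine RS.of_hasSum ?_
  have h := (summable_int_negI k hk).hasSum
  have h1 := h.nat_add_neg
  have hk0 : k ≠ 0 := by omega
  have h2 := (hasSum_K4 k (by simpa using hk)).mul_left (-(2 * I))
  have h3 : (fun n : ℕ => (-I) ^ (n : ℤ) * (((n : ℤ) : ℂ) ^ k)⁻¹ +
      (-I) ^ (-(n : ℤ)) * (((-(n : ℤ) : ℤ) : ℂ) ^ k)⁻¹) = fun n : ℕ => -(2 * I) * K4 k n := by
    funext n
    push_cast
    rw [(Nat.not_even_iff_odd.1 he).neg_pow, K4_nat k n hk0, inv_neg]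
    linear_combination ((n : ℂ) ^ k)⁻¹ * negI_sub n
  rw [h3] at h1
  have h4 := h1.unique h2
  have h5 : LamNegI k = ∑' l : ℤ, (-I) ^ l * ((l : ℂ) ^ k)⁻¹ := by
    simp only [Int.cast_zero, ne_eq, hk0, not_false_eq_true, zero_pow, inv_zero, mul_zero,
      add_zero] at h4
    rw [h4, LamNegI, if_neg he]
    ring
  rw [h5]
  exact h

lemma chi4_ne_one : chi4 ≠ 1 := by
  intro h
  have h1 := chi4_nat 3
  rw [h] at h1
  have h3 : IsUnit ((3 : ℕ) : ZMod 4) := by decide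
  rw [MulChar.one_apply h3] at h1
  norm_num at h1

lemma chi4_add_two (n : ℕ) : chi4 ((n + 2 : ℕ) : ZMod 4) = - chi4 (n : ZMod 4) := by
  rw [chi4_nat, chi4_nat]
  have h : n % 4 = 0 ∨ n % 4 = 1 ∨ n % 4 = 2 ∨ n % 4 = 3 := by omega
  rcases h with h | h | h | h
  · rw [if_pos (by omega), if_pos (by omega)]; simp
  · rw [if_neg (by omega), if_neg (by omega), if_neg (by omega), if_pos (by omega)]
  · rw [if_pos (by omega), if_pos (by omega)]; simp
  · rw [if_neg (by omega), if_pos (by omega), if_neg (by omega), if_neg (by omega)]; simp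

lemma K4_bound (s : ℝ) (h1 : 1 ≤ s) (h2 : s ≤ 2) (n : ℕ) :
    ‖K4 s n + K4 s (n + 2)‖ ≤ 4 * (1 / (n : ℝ) ^ 2) := by
  rcases eq_or_ne n 0 with rfl | hn
  · rw [K4_zero, zero_add, K4_two]; simp
  · rw [K4_eq _ _ hn, K4_eq _ _ (by omega), chi4_add_two]
    have hn' : (0 : ℝ) < n := by positivity
    have e1 : (n : ℂ) ^ (s : ℂ) = (((n : ℝ) ^ s : ℝ) : ℂ) := by
      rw [Complex.ofReal_cpow hn'.le]; simp
    have e2 : ((n + 2 : ℕ) : ℂ) ^ (s : ℂ) = (((n + 2 : ℝ) ^ s : ℝ) : ℂ) := by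
      rw [Complex.ofReal_cpow (by positivity)]; simp
    have e3 : chi4 (n : ZMod 4) / (n : ℂ) ^ (s : ℂ) + -chi4 (n : ZMod 4) / ((n + 2 : ℕ) : ℂ) ^ (s : ℂ) =
        chi4 (n : ZMod 4) * ((((n : ℝ) ^ s)⁻¹ - ((n + 2 : ℝ) ^ s)⁻¹ : ℝ) : ℂ) := by
      rw [e1, e2]; push_cast; ring
    rw [e3, norm_mul]
    have e4 : ‖chi4 (n : ZMod 4)‖ ≤ 1 := DirichletCharacter.norm_le_one _ _
    refine (mul_le_of_le_one_left (norm_nonneg _) e4).trans ?_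
    rw [Complex.norm_real, Real.norm_eq_abs]
    have hr0 : (0 : ℝ) < n / (n + 2) := by positivity
    have hr1 : (n : ℝ) / (n + 2) ≤ 1 := by rw [div_le_one (by positivity)]; linarith
    have e5 : ((n : ℝ) ^ s)⁻¹ - ((n + 2 : ℝ) ^ s)⁻¹ = ((n : ℝ) ^ s)⁻¹ * (1 - (n / (n + 2) : ℝ) ^ s) := by
      rw [Real.div_rpow hn'.le (by positivity)]
      have : (n : ℝ) ^ s ≠ 0 := by positivity
      field_simp
    have e6 : (n / (n + 2) : ℝ) ^ (2 : ℝ) ≤ (n / (n + 2) : ℝ) ^ s :=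
      Real.rpow_le_rpow_of_exponent_ge hr0 hr1 h2
    have e7 : (n / (n + 2) : ℝ) ^ s ≤ 1 := Real.rpow_le_one hr0.le hr1 (by linarith)
    have e8 : (n : ℝ) ≤ (n : ℝ) ^ s := by
      conv_lhs => rw [← Real.rpow_one (n : ℝ)]
      exact Real.rpow_le_rpow_of_exponent_le (by exact_mod_cast Nat.one_le_iff_ne_zero.2 hn) h1
    rw [e5, abs_of_nonneg (mul_nonneg (by positivity) (by linarith))]
    rw [Real.rpow_two] at e6
    have e9 : 1 - (n / (n + 2) : ℝ) ^ 2 ≤ 4 * (1 / (n : ℝ)) := by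
      rw [div_pow, one_sub_div (by positivity), ← mul_div_assoc, mul_one,
        div_le_div_iff₀ (by positivity) (by positivity)]
      nlinarith
    calc ((n : ℝ) ^ s)⁻¹ * (1 - (n / (n + 2) : ℝ) ^ s) ≤ (n : ℝ)⁻¹ * (4 * (1 / (n : ℝ))) := by
          gcongr
          linarith
      _ = _ := by field_simp

lemma hasSum_K4_one : HasSum (fun n => K4 1 n + K4 1 (n + 2)) (2 * Lchi4 1 - 1) := by
  have hb : Summable (fun n : ℕ => 4 * (1 / (n : ℝ) ^ 2)) :=
    ((Real.summable_one_div_nat_pow (p := 2)).2 (by norm_num)).mul_left 4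
  have hs1 : Summable (fun n => K4 1 n + K4 1 (n + 2)) := by
    refine Summable.of_norm_bounded hb fun n => ?_
    have := K4_bound 1 le_rfl (by norm_num) n
    simpa using this
  have hT := tendsto_tsum_of_dominated_convergence (𝓕 := nhdsWithin (1 : ℝ) (Set.Ioi 1))
    (f := fun (s : ℝ) n => K4 s n + K4 s (n + 2)) (g := fun n => K4 1 n + K4 1 (n + 2)) hb
    (by
      intro n
      have hc : ∀ n, ContinuousAt (fun s : ℝ => K4 s n) 1 := by
        intro n
        rcases eq_or_ne n 0 with rfl | hn
        · simp only [K4_zero]; exact continuousAt_const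
        · have hn' : (n : ℂ) ≠ 0 := by exact_mod_cast hn
          simp only [K4_eq _ _ hn]
          refine ContinuousAt.div continuousAt_const ?_ ?_
          · exact (Complex.continuous_ofReal.continuousAt).const_cpow (Or.inl hn')
          · simp [hn']
      have hc' : ∀ n, Filter.Tendsto (fun s : ℝ => K4 s n) (nhds 1) (nhds (K4 1 n)) := by
        intro n
        have := (hc n).tendsto
        rwa [Complex.ofReal_one] at this
      exact ((hc' n).add (hc' (n + 2))).mono_left nhdsWithin_le_nhds)
    (by
      have : Set.Ioc (1 : ℝ) 2 ∈ nhdsWithin (1 : ℝ) (Set.Ioi 1) := Ioc_mem_nhdsGT (by norm_num)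
      filter_upwards [this] with s hs n
      exact K4_bound s hs.1.le hs.2 n)
  have hL : Filter.Tendsto (fun s : ℝ => 2 * Lchi4 s - 1) (nhdsWithin (1 : ℝ) (Set.Ioi 1))
      (nhds (2 * Lchi4 1 - 1)) := by
    have h0 : Continuous Lchi4 := (DirichletCharacter.differentiable_LFunction chi4_ne_one).continuous
    have h1 : Continuous (fun s : ℝ => 2 * Lchi4 s - 1) := by fun_prop
    have := h1.tendsto 1
    simp only [Complex.ofReal_one] at this
    exact this.mono_left nhdsWithin_le_nhds
  have heq : ∀ᶠ s : ℝ in nhdsWithin (1 : ℝ) (Set.Ioi 1),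
      ∑' n, (K4 s n + K4 s (n + 2)) = 2 * Lchi4 s - 1 := by
    filter_upwards [self_mem_nhdsWithin] with s hs
    have h1 := hasSum_K4 s (by simpa using hs)
    have h2 := (hasSum_nat_add_iff' 2).2 h1
    rw [sum_range_succ, sum_range_one, K4_zero, K4_one] at h2
    rw [(h1.add h2).tsum_eq]
    ring
  have := tendsto_nhds_unique (hT.congr' heq) hL
  rw [← this]
  exact hs1.hasSum

lemma RS_one : RS (fun l : ℤ => (-I) ^ l * (l : ℂ)⁻¹) (LamNegI 1) := by
  set g : ℤ → ℂ := fun l : ℤ => (-I) ^ l * (l : ℂ)⁻¹ with hg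
  have hI2 : (-I) ^ (2 : ℤ) = -1 := by
    rw [show (2 : ℤ) = ((2 : ℕ) : ℤ) by norm_num, zpow_natCast]; simp
  have hI0 : (-I) ≠ 0 := by simp
  have hsum : Summable (fun l => g l + g (l + 2)) := by
    have h0 := (Real.summable_one_div_int_pow (p := 2)).2 (by norm_num)
    have h1 := (h0.add ((Equiv.addRight (2 : ℤ)).summable_iff.2 h0)).mul_left 2
    refine Summable.of_norm_bounded h1 fun l => ?_
    simp only [hg, Function.comp, Equiv.coe_addRight]
    rw [zpow_add₀ hI0, hI2]
    have e : (-I) ^ l * (l : ℂ)⁻¹ + (-I) ^ l * -1 * ((l + 2 : ℤ) : ℂ)⁻¹ =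
        (-I) ^ l * (((l : ℝ)⁻¹ - ((l + 2 : ℤ) : ℝ)⁻¹ : ℝ) : ℂ) := by push_cast; ring
    rw [e, norm_mul, norm_negI_zpow, one_mul, Complex.norm_real, Real.norm_eq_abs]
    rcases eq_or_ne l 0 with rfl | hl
    · norm_num
    rcases eq_or_ne (l + 2) 0 with hl2 | hl2
    · rw [hl2, show l = -2 by omega]; norm_num
    have hx : (l : ℝ) ≠ 0 := by exact_mod_cast hl
    have hy : ((l + 2 : ℤ) : ℝ) ≠ 0 := by exact_mod_cast hl2
    have hxy : ((l + 2 : ℤ) : ℝ) = l + 2 := by push_cast; ring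
    have e2 : (l : ℝ)⁻¹ - ((l + 2 : ℤ) : ℝ)⁻¹ = 2 * ((l : ℝ)⁻¹ * ((l + 2 : ℤ) : ℝ)⁻¹) := by
      rw [hxy] at hy ⊢
      field_simp
      ring
    rw [e2, one_div, one_div, ← inv_pow, ← inv_pow]
    rw [abs_le]
    constructor <;> nlinarith [sq_nonneg ((l : ℝ)⁻¹ + ((l + 2 : ℤ) : ℝ)⁻¹),
      sq_nonneg ((l : ℝ)⁻¹ - ((l + 2 : ℤ) : ℝ)⁻¹), sq_nonneg ((l : ℝ)⁻¹),
      sq_nonneg (((l + 2 : ℤ) : ℝ)⁻¹)]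
  set k : ℤ → ℂ := fun l => -(2 * I) * K4 1 l.natAbs with hk
  have hgk0 : ∀ n : ℕ, g n + g (-n) = k n := by
    intro n
    have h1 := K4_nat 1 n one_ne_zero
    simp only [Nat.cast_one, pow_one] at h1
    simp only [hg, hk, Int.natAbs_natCast, h1]
    push_cast
    rw [inv_neg]
    linear_combination ((n : ℂ))⁻¹ * negI_sub n
  have hgk : ∀ l : ℤ, g l + g (-l) = k l := by
    intro l
    rcases Int.natAbs_eq l with h | h
    · rw [h]; exact hgk0 _
    · rw [h, neg_neg, add_comm, hgk0]
      simp [hk]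
  have h1 := hsum.hasSum
  set v := ∑' l, (g l + g (l + 2))
  have h2 := (Equiv.subLeft (-2 : ℤ)).hasSum_iff.2 h1
  have h3 : HasSum (fun l => k l + k (l + 2)) (v + v) := by
    refine (h1.add h2).congr_fun' ?_
    intro l
    simp only [Function.comp, Equiv.subLeft_apply]
    rw [← hgk, ← hgk, show -2 - l + 2 = -l by ring, show -2 - l = -(l + 2) by ring]
    ring
  have hK := hasSum_K4_one
  have h4 : HasSum (fun n : ℕ => k n + k (n + 2)) (-(2 * I) * (2 * Lchi4 1 - 1)) := by
    refine (hK.mul_left (-(2 * I))).congr_fun' ?_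
    intro n
    simp only [hk, Int.natAbs_natCast]
    rw [show ((n : ℤ) + 2).natAbs = n + 2 by omega]
    ring
  have h5 : HasSum (fun n : ℕ => k (-(n + 1 : ℤ)) + k (-(n + 1 : ℤ) + 2))
      (-(2 * I) * (2 * Lchi4 1 + 1)) := by
    refine (hasSum_nat_add_iff' 2).1 ?_
    have hK1 := (hasSum_nat_add_iff' 1).2 hK
    refine ((hK1.mul_left (-(2 * I))).congr_fun' ?_).congr_val ?_
    · intro n
      simp only [hk]
      rw [show (-(((n + 2 : ℕ) : ℤ) + 1)).natAbs = n + 3 by omega,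
        show (-(((n + 2 : ℕ) : ℤ) + 1) + 2).natAbs = n + 1 by omega]
      ring
    · rw [sum_range_succ, sum_range_one, sum_range_one]
      simp only [hk]
      norm_num [K4_zero, K4_one, K4_two]
      ring
  have h6 := h3.unique (h4.of_nat_of_neg_add_one h5)
  have h7 : v = 2 * LamNegI 1 := by
    rw [LamNegI, if_neg (by decide), Nat.cast_one]
    linear_combination h6 / 2
  unfold RS
  rw [← h7]
  exact h1

lemma LamNegI_zero : LamNegI 0 = -1 := by
  rw [LamNegI, if_pos (by decide)]
  simp [riemannZeta_zero]
  norm_num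

lemma RS_dl (k : ℕ) : RS (fun l : ℤ => (-I) ^ l * dl k l) (LamNegI k) := by
  rcases Nat.lt_or_ge 1 k with h | h
  · simp only [dl_pos (show k ≠ 0 by omega)]
    by_cases he : Even k
    · exact RS_even k h he
    · exact RS_odd k h he
  · interval_cases k
    · rw [LamNegI_zero]
      refine RS.of_hasSum ?_
      have := hasSum_ite_eq (0 : ℤ) (-1 : ℂ)
      refine this.congr_fun' ?_
      intro l
      by_cases hl : l = 0
      · subst hl; simp [dl]
      · simp [dl, hl]
    · simpa only [dl_pos one_ne_zero, pow_one] using RS_one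

lemma RS_dl_shift (k : ℕ) (x : ℤ) :
    RS (fun l : ℤ => (-I) ^ l * dl k (l + x)) ((-I) ^ (-x) * LamNegI k) := by
  have := ((RS_dl k).shift x).mul_left ((-I) ^ (-x))
  have h : (fun l : ℤ => (-I) ^ (-x) * ((-I) ^ (l + x) * dl k (l + x))) =
      fun l : ℤ => (-I) ^ l * dl k (l + x) := by
    funext l
    rw [← mul_assoc, ← zpow_add₀ (by simp)]
    congr 2; ring
  rwa [h] at this

/-! ### Inner sum -/

lemma sf_inner (p a c : ℕ) (hp : 0 < p) (ha : 0 < a) (hc : 0 < c) (m n : ℤ) (hm : m ≠ 0)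
    (hn : n ≠ 0) (hmn : m + n ≠ 0)
    (hsum : Summable (fun l : ℤ => (-I) ^ l * (dl p l * dl a (l + m) * dl c (l + m + n)))) :
    ∑' l : ℤ, (-I) ^ l * (dl p l * dl a (l + m) * dl c (l + m + n)) =
      ∑ j ∈ range (p + 1), cf1 p a c m ((m + n : ℤ) : ℂ) j * LamNegI j +
      (-I) ^ (-(m + n)) * ∑ j ∈ range (c + 1), cf2 p a c n ((m + n : ℤ) : ℂ) j * LamNegI j +
      (-I) ^ (-m) * ∑ j ∈ range (a + 1), cf3 p a c m ((m + n : ℤ) : ℂ) j * LamNegI j +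
      (-I) ^ (-m) * ∑ j ∈ range (a + 1), cf4 p a c n ((m + n : ℤ) : ℂ) j * LamNegI j := by
  have h0 := RS.of_hasSum hsum.hasSum
  refine h0.unique ?_
  have k1 := RS.sum (range (p + 1)) (fun j _ => (RS_dl j).mul_left (cf1 p a c m ((m + n : ℤ) : ℂ) j))
  have k2 := RS.sum (range (c + 1))
    (fun j _ => (RS_dl_shift j (m + n)).mul_left (cf2 p a c n ((m + n : ℤ) : ℂ) j))
  have k3 := RS.sum (range (a + 1))
    (fun j _ => (RS_dl_shift j m).mul_left (cf3 p a c m ((m + n : ℤ) : ℂ) j))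
  have k4 := RS.sum (range (a + 1))
    (fun j _ => (RS_dl_shift j m).mul_left (cf4 p a c n ((m + n : ℤ) : ℂ) j))
  have k := ((k1.add k2).add k3).add k4
  convert k using 1
  · funext l
    rw [sf_pf p a c hp ha hc m n hm hn hmn l, mul_add, mul_add, mul_add, mul_sum, mul_sum, mul_sum,
      mul_sum]
    simp only [mul_left_comm, add_assoc]
  · simp only [mul_sum, mul_left_comm]

/-! ### Summability -/

lemma sf_shear {β : Type*} {u : ℤ → ℝ} {g : β → ℝ} (hu : Summable u) (hg : Summable g)
    (hu0 : ∀ l, 0 ≤ u l) (hg0 : ∀ x, 0 ≤ g x) (φ : β → ℤ) :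
    Summable (fun x : β × ℤ => g x.1 * u (x.2 + φ x.1)) := by
  have h := hg.mul_of_nonneg hu hg0 hu0
  exact (Equiv.prodShear (Equiv.refl β) (fun x => Equiv.addRight (φ x))).summable_iff.2 h

/-- inverse square -/
noncomputable def usq (l : ℤ) : ℝ := 1 / (l : ℝ) ^ 2

lemma usq_nonneg (l : ℤ) : 0 ≤ usq l := by unfold usq; positivity
lemma summable_usq : Summable usq := (Real.summable_one_div_int_pow (p := 2)).2 (by norm_num)

noncomputable def vn (σ : ℝ) (n : ℕ) : ℝ := ((n + 1 : ℕ) : ℝ) ^ (-σ)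

lemma vn_nonneg (σ : ℝ) (n : ℕ) : 0 ≤ vn σ n := by unfold vn; positivity
lemma summable_vn (σ : ℝ) (h : 1 < σ) : Summable (vn σ) := by
  have := Real.summable_nat_rpow (p := -σ) |>.2 (by linarith)
  exact (summable_nat_add_iff 1).2 this

lemma norm_vn (s : ℂ) (n : ℕ) : ‖(((n + 1 : ℕ) : ℂ) ^ s)⁻¹‖ = vn s.re n := by
  rw [norm_inv, Complex.norm_natCast_cpow_of_pos (Nat.succ_pos n), vn, Real.rpow_neg (by positivity)]

/-- majorant of double sums -/
noncomputable def mj2 (σ : ℝ) (x : ℤ × ℕ) : ℝ := (usq x.1 + usq (x.1 + (x.2 + 1))) * vn σ x.2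

lemma mj2_nonneg (σ : ℝ) (x : ℤ × ℕ) : 0 ≤ mj2 σ x :=
  mul_nonneg (add_nonneg (usq_nonneg _) (usq_nonneg _)) (vn_nonneg _ _)

lemma summable_mj2 (σ : ℝ) (h : 1 < σ) : Summable (mj2 σ) := by
  have h1 := sf_shear summable_usq (summable_vn σ h) usq_nonneg (vn_nonneg σ) (fun _ => 0)
  have h2 := sf_shear summable_usq (summable_vn σ h) usq_nonneg (vn_nonneg σ) (fun n => (n : ℤ) + 1)
  have h3 := (Equiv.prodComm ℤ ℕ).summable_iff.2 (h1.add h2)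
  refine h3.congr fun x => ?_
  simp [mj2]
  ring

lemma summable_mj3 (σ : ℝ) (h : 1 < σ) :
    Summable (fun x : (ℤ × ℕ) × ℤ => mj2 σ x.1 * (usq x.2 + usq (x.2 + x.1.1))) := by
  have h1 := sf_shear summable_usq (summable_mj2 σ h) usq_nonneg (mj2_nonneg σ) (fun _ => 0)
  have h2 := sf_shear summable_usq (summable_mj2 σ h) usq_nonneg (mj2_nonneg σ) (fun x => x.1)
  refine (h1.add h2).congr fun x => ?_
  simp
  ring

lemma norm_inv_int (p : ℕ) (hp : 0 < p) (l : ℤ) : ‖((l : ℂ) ^ p)⁻¹‖ ≤ |(l : ℝ)|⁻¹ := by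
  rw [norm_inv, norm_pow, Complex.norm_intCast]
  rcases eq_or_ne l 0 with rfl | hl
  · simp [hp.ne']
  · have h1 : (1 : ℝ) ≤ |(l : ℝ)| := by exact_mod_cast Int.one_le_abs hl
    have := le_self_pow₀ h1 hp.ne'
    gcongr

lemma norm_inv_int_le_one (p : ℕ) (hp : 0 < p) (l : ℤ) : ‖((l : ℂ) ^ p)⁻¹‖ ≤ 1 := by
  refine (norm_inv_int p hp l).trans ?_
  rcases eq_or_ne l 0 with rfl | hl
  · simp
  · have h1 : (1 : ℝ) ≤ |(l : ℝ)| := by exact_mod_cast Int.one_le_abs hl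
    exact inv_le_one_of_one_le₀ h1

lemma norm_inv_int_mul (p q : ℕ) (hp : 0 < p) (hq : 0 < q) (l l' : ℤ) :
    ‖((l : ℂ) ^ p)⁻¹‖ * ‖((l' : ℂ) ^ q)⁻¹‖ ≤ usq l + usq l' := by
  have h1 := norm_inv_int p hp l
  have h2 := norm_inv_int q hq l'
  have h3 : usq l = |(l : ℝ)|⁻¹ ^ 2 := by rw [usq, one_div, inv_pow, sq_abs]
  have h4 : usq l' = |(l' : ℝ)|⁻¹ ^ 2 := by rw [usq, one_div, inv_pow, sq_abs]
  rw [h3, h4]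
  have h5 := mul_le_mul h1 h2 (norm_nonneg _) (by positivity)
  nlinarith [sq_nonneg (|(l : ℝ)|⁻¹ - |(l' : ℝ)|⁻¹), sq_nonneg (|(l : ℝ)|⁻¹),
    sq_nonneg (|(l' : ℝ)|⁻¹)]

/-- `V(m,n) = m^{-q} (m+n)^{-b} n^{-s}` -/
noncomputable def Vt (q b : ℕ) (s : ℂ) (x : ℤ × ℕ) : ℂ :=
  ((x.1 : ℂ) ^ q)⁻¹ * (((x.1 + (x.2 + 1) : ℤ) : ℂ) ^ b)⁻¹ * (((x.2 + 1 : ℕ) : ℂ) ^ s)⁻¹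

lemma norm_Vt (q b : ℕ) (hq : 0 < q) (hb : 0 < b) (s : ℂ) (x : ℤ × ℕ) :
    ‖Vt q b s x‖ ≤ mj2 s.re x := by
  rw [Vt, norm_mul, norm_mul, norm_vn, mj2]
  exact mul_le_mul_of_nonneg_right (norm_inv_int_mul q b hq hb _ _) (vn_nonneg _ _)

lemma hasSum_T (p q : ℕ) (hp : 0 < p) (hq : 0 < q) (s : ℂ) (hs : 1 < s.re) (x y : ℂ)
    (hx : ‖x‖ = 1) (hy : ‖y‖ = 1) :
    HasSum (fun z : ℤ × ℕ => x ^ z.1 * y ^ (z.2 + 1) * Vt p q s z) (T p s q x y) := by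
  have hsum : Summable (fun z : ℤ × ℕ => x ^ z.1 * y ^ (z.2 + 1) * Vt p q s z) := by
    refine Summable.of_norm_bounded (summable_mj2 s.re hs) fun z => ?_
    rw [norm_mul, norm_mul, norm_zpow, norm_pow, hx, hy]
    simpa using norm_Vt p q hp hq s z
  refine hsum.hasSum.congr_val ?_
  rw [T]
  refine tsum_congr fun z => ?_
  split_ifs with h
  · rw [Vt, div_eq_mul_inv, mul_inv, mul_inv, add_assoc]
    ring
  · rw [not_and_or, not_not, not_not] at h
    rcases h with h | h
    · rw [Vt, h]; simp [hp.ne']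
    · rw [Vt, h]; simp [hq.ne']

/-- the full summand -/
noncomputable def FF (p q a b c : ℕ) (s : ℂ) (x : (ℤ × ℕ) × ℤ) : ℂ :=
  (-1) ^ x.1.1 * I ^ (x.1.2 + 1) * Vt q b s x.1 *
    ((-I) ^ x.2 * (dl p x.2 * dl a (x.2 + x.1.1) * dl c (x.2 + x.1.1 + (x.1.2 + 1))))

lemma summable_FF (p q a b c : ℕ) (hp : 0 < p) (hq : 0 < q) (ha : 0 < a)
    (hb : 0 < b) (hc : 0 < c) (s : ℂ) (hs : 1 < s.re) : Summable (FF p q a b c s) := by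
  refine Summable.of_norm_bounded (summable_mj3 s.re hs) fun x => ?_
  rw [FF, dl_pos hp.ne', dl_pos ha.ne', dl_pos hc.ne']
  simp only [norm_mul, norm_zpow, norm_pow, norm_neg, norm_I, norm_one, one_zpow, one_pow, one_mul]
  refine mul_le_mul (norm_Vt q b hq hb s _) ?_ (by positivity) (mj2_nonneg _ _)
  exact (mul_le_of_le_one_right (by positivity) (norm_inv_int_le_one c hc _)).trans
    (norm_inv_int_mul p a hp ha _ _)

lemma summable_inner (p a c : ℕ) (hp : 0 < p) (ha : 0 < a) (hc : 0 < c) (m n : ℤ) :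
    Summable (fun l : ℤ => (-I) ^ l * (dl p l * dl a (l + m) * dl c (l + m + n))) := by
  have h := summable_usq.add ((Equiv.addRight m).summable_iff.2 summable_usq)
  refine Summable.of_norm_bounded h fun l => ?_
  rw [dl_pos hp.ne', dl_pos ha.ne', dl_pos hc.ne']
  simp only [norm_mul, norm_zpow, norm_neg, norm_I, one_zpow, one_mul]
  exact (mul_le_of_le_one_right (by positivity) (norm_inv_int_le_one c hc _)).trans
    (norm_inv_int_mul p a hp ha _ _)

/-! ### The right-hand side -/

lemma Vt_split (q b e d k : ℕ) (s : ℂ) (x : ℤ × ℕ) :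
    Vt (q + e) (b + d) (s + k) x = Vt q b s x * (((x.1 : ℂ) ^ e)⁻¹ *
      (((x.1 + (x.2 + 1) : ℤ) : ℂ) ^ d)⁻¹ * ((((x.2 : ℤ) + 1 : ℤ) : ℂ) ^ k)⁻¹) := by
  have h : (((x.2 : ℤ) + 1 : ℤ) : ℂ) = ((x.2 + 1 : ℕ) : ℂ) := by push_cast; rfl
  have h0 : ((x.2 + 1 : ℕ) : ℂ) ≠ 0 := Nat.cast_ne_zero.2 (Nat.succ_ne_zero _)
  rw [Vt, Vt, h, Complex.cpow_add _ _ h0, Complex.cpow_natCast, pow_add, pow_add]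
  simp only [mul_inv]
  ring

lemma re_add_nat (s : ℂ) (hs : 1 < s.re) (k : ℕ) : 1 < (s + k).re := by
  have : (0 : ℝ) ≤ k := Nat.cast_nonneg k
  simp only [add_re, natCast_re]
  linarith

/-- one family on the right-hand side -/
lemma hasSum_part {ι : Type*} (u : Finset ι) (v : ι → Finset ℕ) (q b : ℕ) (hq : 0 < q) (hb : 0 < b)
    (s : ℂ) (hs : 1 < s.re) (x y : ℂ) (hx : ‖x‖ = 1) (hy : ‖y‖ = 1) (A : ι → ℂ) (B : ι → ℕ → ℂ)
    (e d k : ι → ℕ → ℕ) :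
    HasSum (fun z : ℤ × ℕ => x ^ z.1 * y ^ (z.2 + 1) * Vt q b s z * ∑ j ∈ u, A j * ∑ ω ∈ v j,
        B j ω * (((z.1 : ℂ) ^ e j ω)⁻¹ * (((z.1 + (z.2 + 1) : ℤ) : ℂ) ^ d j ω)⁻¹ *
          ((((z.2 : ℤ) + 1 : ℤ) : ℂ) ^ k j ω)⁻¹))
      (∑ j ∈ u, A j * ∑ ω ∈ v j, B j ω * T (q + e j ω) (s + k j ω) (b + d j ω) x y) := by
  have h := hasSum_sum (s := u) fun j _ => (hasSum_sum (s := v j) fun ω _ =>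
    (hasSum_T (q + e j ω) (b + d j ω) (by omega) (by omega) (s + k j ω) (re_add_nat s hs _)
      x y hx hy).mul_left (B j ω)).mul_left (A j)
  refine h.congr_fun' fun z => ?_
  simp only [Vt_split, mul_sum]
  refine sum_congr rfl fun j _ => sum_congr rfl fun ω _ => ?_
  ring

lemma wt2 (m : ℤ) (n : ℕ) :
    (-1 : ℂ) ^ m * I ^ (n + 1) * (-I) ^ (-(m + (n + 1))) = (-I) ^ m * (-1) ^ (n + 1) := by
  rw [neg_add, zpow_add₀ (by simp), zpow_neg, zpow_neg, ← inv_zpow, ← inv_zpow, negI_inv]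
  have h : (-I) ^ m = (-1) ^ m * I ^ m := by rw [← mul_zpow]; simp
  have h2 : (-1 : ℂ) ^ (n + 1) = I ^ (n + 1) * I ^ (n + 1) := by rw [← mul_pow]; simp
  have h3 : I ^ ((n : ℤ) + 1) = I ^ (n + 1) := by exact_mod_cast zpow_natCast I (n + 1)
  rw [h, h2, h3]
  ring

lemma wt3 (m : ℤ) : (-1 : ℂ) ^ m * (-I) ^ (-m) = (-I) ^ m := by
  rw [zpow_neg, ← inv_zpow, negI_inv, ← mul_zpow]; simp

lemma add4_congr {x y z w x' y' z' w' : ℂ} (h1 : x = x') (h2 : y = y') (h3 : z = z')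
    (h4 : w = w') : x + y + z + w = x' + y' + z' + w' := by rw [h1, h2, h3, h4]

lemma dsum_congr (w : ℂ) (N : ℕ) (v : ℕ → Finset ℕ) (A : ℕ → ℂ) (B : ℕ → ℕ → ℂ)
    (t : ℕ → ℕ → ℂ) {t' : ℕ → ℕ → ℂ}
    (h : ∀ j ω, j ∈ range N → ω ∈ v j → t' j ω = t j ω) :
    w * ∑ j ∈ range N, A j * ∑ ω ∈ v j, B j ω * t j ω =
      w * ∑ j ∈ range N, A j * ∑ ω ∈ v j, B j ω * t' j ω := by
  congr 1
  refine sum_congr rfl fun j hj => ?_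
  congr 1
  refine sum_congr rfl fun ω hω => ?_
  rw [h j ω hj hω]

lemma hasSum_J1 (p q a b c : ℕ) (hp : 0 < p) (hq : 0 < q) (ha : 0 < a)
    (hb : 0 < b) (hc : 0 < c) (s : ℂ) (hs : 1 < s.re) :
    HasSum (fun x : ℤ × ℕ => ∑' l : ℤ, FF p q a b c s (x, l)) (J1 p q a b c s) := by
  have nI : ‖-I‖ = 1 := by simp
  have n1 : ‖(-1 : ℂ)‖ = 1 := by simp
  have k1 := (hasSum_part (range (p + 1)) (fun j => range (p - j + 1)) q b hq hb s hs (-1) I n1 norm_I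
    (fun j => (-1 : ℂ) ^ j * LamNegI j) (fun j ω => (Nat.choose (ω + a - 1) ω : ℂ) *
      (Nat.choose (p + c - j - ω - 1) (c - 1) : ℂ)) (fun _ ω => a + ω)
      (fun j ω => p + c - j - ω) (fun _ _ => 0)).mul_left ((-1 : ℂ) ^ p)
  have k2 := (hasSum_part (range (c + 1)) (fun j => range (c - j + 1)) q b hq hb s hs (-I) (-1) nI n1
    (fun j => LamNegI j) (fun j ω => (Nat.choose (ω + a - 1) ω : ℂ) *
      (Nat.choose (p + c - j - ω - 1) (p - 1) : ℂ)) (fun _ _ => 0)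
      (fun j ω => p + c - j - ω) (fun _ ω => a + ω)).mul_left ((-1 : ℂ) ^ (p + a))
  have k3 := (hasSum_part (range (a + 1)) (fun _ => range p) q b hq hb s hs (-I) I nI norm_I
    (fun j => LamNegI j) (fun j ω => (Nat.choose (ω + a - j) ω : ℂ) *
      (Nat.choose (p + c - 2 - ω) (c - 1) : ℂ)) (fun j ω => a - j + ω + 1)
      (fun j ω => p + c - 1 - ω) (fun _ _ => 0)).mul_left ((-1 : ℂ) ^ p)
  have k4 := (hasSum_part (range (a + 1)) (fun _ => range c) q b hq hb s hs (-I) I nI norm_I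
    (fun j => (-1 : ℂ) ^ j * LamNegI j) (fun j ω => (Nat.choose (ω + a - j) ω : ℂ) *
      (Nat.choose (p + c - 2 - ω) (p - 1) : ℂ)) (fun _ _ => 0)
      (fun j ω => p + c - 1 - ω) (fun j ω => a - j + ω + 1)).mul_left ((-1 : ℂ) ^ (p + a))
  refine (((((k1.add k2).add k3).add k4).congr_val ?_).congr_fun' ?_)
  · unfold J1
    refine add4_congr ?_ ?_ ?_ ?_
    · refine dsum_congr _ _ _ _ _ _ fun j ω hj hω => ?_
      rw [Nat.cast_zero, add_zero, ← add_assoc q a ω,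
        show b + (p + c - j - ω) = p + b + c - j - ω by rw [mem_range] at hj hω; omega]
    · refine dsum_congr _ _ _ _ _ _ fun j ω hj hω => ?_
      rw [Nat.cast_add, add_zero, ← add_assoc s,
        show b + (p + c - j - ω) = p + b + c - j - ω by rw [mem_range] at hj hω; omega]
    · refine dsum_congr _ _ _ _ _ _ fun j ω hj hω => ?_
      rw [Nat.cast_zero, add_zero,
        show q + (a - j + ω + 1) = q + a - j + ω + 1 by rw [mem_range] at hj hω; omega,
        show b + (p + c - 1 - ω) = p + b + c - 1 - ω by rw [mem_range] at hj hω; omega]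
    · refine dsum_congr _ _ _ _ _ _ fun j ω hj hω => ?_
      rw [Nat.cast_add, Nat.cast_add, Nat.cast_one, add_zero, ← add_assoc s, ← add_assoc s,
        show b + (p + c - 1 - ω) = p + b + c - 1 - ω by rw [mem_range] at hj hω; omega]
  · rintro ⟨m, n⟩
    simp only [FF]
    rw [tsum_mul_left]
    by_cases hm : m = 0
    · have : Vt q b s (m, n) = 0 := by simp [Vt, hm, hq.ne']
      simp [this]
    by_cases hmn : m + ((n : ℤ) + 1) = 0
    · have : Vt q b s (m, n) = 0 := by simp only [Vt, hmn]; simp [hb.ne']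
      simp [this]
    rw [sf_inner p a c hp ha hc m ((n : ℤ) + 1) hm (by omega) hmn
      (summable_inner p a c hp ha hc m _)]
    rw [mul_add, mul_add, mul_add]
    refine add4_congr ?_ ?_ ?_ ?_
    · simp only [cf1, mul_sum, sum_mul]
      refine sum_congr rfl fun j _ => sum_congr rfl fun ω _ => ?_
      simp only [pow_zero, inv_one]
      ring
    · rw [← wt2]
      simp only [cf2, mul_sum, sum_mul]
      refine sum_congr rfl fun j _ => sum_congr rfl fun ω _ => ?_
      simp only [pow_zero, inv_one]
      ring
    · rw [← wt3 m]
      simp only [cf3, mul_sum, sum_mul]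
      refine sum_congr rfl fun j _ => sum_congr rfl fun ω _ => ?_
      simp only [pow_zero, inv_one]
      ring
    · rw [← wt3 m]
      simp only [cf4, mul_sum, sum_mul]
      refine sum_congr rfl fun j _ => sum_congr rfl fun ω _ => ?_
      simp only [pow_zero, inv_one]
      ring

lemma tsum_FF_eq_J1 (p q a b c : ℕ) (hp : 0 < p) (hq : 0 < q) (ha : 0 < a)
    (hb : 0 < b) (hc : 0 < c) (s : ℂ) (hs : 1 < s.re) :
    ∑' x, FF p q a b c s x = J1 p q a b c s := by
  rw [(summable_FF p q a b c hp hq ha hb hc s hs).tsum_prod]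
  exact (hasSum_J1 p q a b c hp hq ha hb hc s hs).tsum_eq

/-! ### The left-hand side: decomposition into chambers -/

lemma I_zpow_congr (u : ℤ) (k : ℕ) (h : (4 : ℤ) ∣ u - k) : I ^ u = I ^ k := by
  obtain ⟨w, hw⟩ := h
  have h4 : I ^ (4 : ℤ) = 1 := by exact_mod_cast I_pow_four
  rw [show u = 4 * w + k by linarith, zpow_add₀ I_ne_zero, zpow_mul, h4, one_zpow, one_mul,
    zpow_natCast]

lemma wt_all (l m : ℤ) (n : ℕ) :
    (-1 : ℂ) ^ m * I ^ n * (-I) ^ l = I ^ (3 * l + 2 * m + n) := by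
  have h2 : I ^ (2 : ℤ) = -1 := by exact_mod_cast I_sq
  have h3 : I ^ (3 : ℤ) = -I := by exact_mod_cast I_pow_three
  rw [zpow_add₀ I_ne_zero, zpow_add₀ I_ne_zero, zpow_mul, zpow_mul, h2, h3, zpow_natCast]
  ring

lemma sgn_pow_inv (σ : ℤ) (hσ : σ = 1 ∨ σ = -1) (X p : ℕ) (l : ℤ) (h : l = σ * X) :
    ((l : ℂ) ^ p)⁻¹ = (σ : ℂ) ^ p * ((X : ℂ) ^ (p : ℂ))⁻¹ := by
  rw [Complex.cpow_natCast, h]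
  push_cast
  rw [mul_pow, mul_inv]
  congr 1
  rcases hσ with rfl | rfl
  · simp
  · rw [← inv_pow]; norm_num

lemma FF_eval (p q a b c : ℕ) (hp : 0 < p) (ha : 0 < a) (hc : 0 < c) (s : ℂ)
    (l m : ℤ) (n : ℕ) (σ₁ σ₂ σ₃ σ₄ σ₅ : ℤ) (X₁ X₂ X₃ X₄ X₅ X₆ k : ℕ)
    (e₁ : σ₁ = 1 ∨ σ₁ = -1) (e₂ : σ₂ = 1 ∨ σ₂ = -1) (e₃ : σ₃ = 1 ∨ σ₃ = -1)
    (e₄ : σ₄ = 1 ∨ σ₄ = -1) (e₅ : σ₅ = 1 ∨ σ₅ = -1)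
    (h₁ : l = σ₁ * X₁) (h₂ : m = σ₂ * X₂) (h₃ : l + m = σ₃ * X₃) (h₄ : m + (n + 1) = σ₄ * X₄)
    (h₅ : l + m + (n + 1) = σ₅ * X₅) (h₆ : n + 1 = X₆)
    (hk : (4 : ℤ) ∣ 3 * l + 2 * m + (n + 1 : ℕ) - k) :
    FF p q a b c s ((m, n), l) =
      ((σ₁ : ℂ) ^ p * (σ₂ : ℂ) ^ q * (σ₃ : ℂ) ^ a * (σ₄ : ℂ) ^ b * (σ₅ : ℂ) ^ c) *
      (I ^ k * (((X₁ : ℂ) ^ (p : ℂ))⁻¹ * ((X₂ : ℂ) ^ (q : ℂ))⁻¹ * ((X₃ : ℂ) ^ (a : ℂ))⁻¹ *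
        ((X₄ : ℂ) ^ (b : ℂ))⁻¹ * ((X₅ : ℂ) ^ (c : ℂ))⁻¹ * ((X₆ : ℂ) ^ s)⁻¹)) := by
  have w := wt_all l m (n + 1)
  rw [I_zpow_congr _ _ hk] at w
  simp only [FF, Vt]
  rw [dl_pos hp.ne', dl_pos ha.ne', dl_pos hc.ne', sgn_pow_inv σ₁ e₁ X₁ p l h₁,
    sgn_pow_inv σ₂ e₂ X₂ q m h₂, sgn_pow_inv σ₃ e₃ X₃ a _ h₃, sgn_pow_inv σ₄ e₄ X₄ b _ h₄,
    sgn_pow_inv σ₅ e₅ X₅ c _ h₅, h₆, ← w, h₆]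
  ring

lemma chamber (f : (ℤ × ℕ) × ℤ → ℂ) (hf : Summable f) (M : ℕ → ℕ → ℕ → ℤ) (N : ℕ → ℕ → ℕ → ℕ)
    (L : ℕ → ℕ → ℕ → ℤ) (P : ℤ → ℤ → ℤ → Prop) [∀ l m n, Decidable (P l m n)]
    (hinj : ∀ x y z x' y' z', M x y z = M x' y' z' → N x y z = N x' y' z' →
      L x y z = L x' y' z' → x = x' ∧ y = y' ∧ z = z')
    (hP : ∀ x y z, P (L x y z) (M x y z) (N x y z + 1))
    (hsurj : ∀ (l m : ℤ) (n : ℕ), P l m (n + 1) → ∃ x y z, M x y z = m ∧ N x y z = n ∧ L x y z = l)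
    (sg s₁ s₂ s₃ s₄ s₅ s₆ : ℂ)
    (hfe : ∀ x y z : ℕ, f ((M x y z, N x y z), L x y z) = sg *
      (I ^ (3 * (x + 1) + 2 * (y + 1) + (z + 1)) * (((((x + 1 : ℕ) : ℂ)) ^ s₁)⁻¹ *
      (((y + 1 : ℕ) : ℂ) ^ s₂)⁻¹ * (((z + 1 : ℕ) : ℂ) ^ s₃)⁻¹ *
      (((x + 1 + (y + 1) : ℕ) : ℂ) ^ s₄)⁻¹ * (((y + 1 + (z + 1) : ℕ) : ℂ) ^ s₅)⁻¹ *
        (((x + 1 + (y + 1) + (z + 1) : ℕ) : ℂ) ^ s₆)⁻¹))) :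
    HasSum (fun x : (ℤ × ℕ) × ℤ => if P x.2 x.1.1 (x.1.2 + 1) then f x else 0)
      (sg * Zlam1 s₁ s₂ s₃ s₄ s₅ s₆) := by
  let e : ℕ × ℕ × ℕ → (ℤ × ℕ) × ℤ := fun t =>
    ((M t.1 t.2.1 t.2.2, N t.1 t.2.1 t.2.2), L t.1 t.2.1 t.2.2)
  have he : Function.Injective e := by
    rintro ⟨x, y, z⟩ ⟨x', y', z'⟩ h
    simp only [e, Prod.mk.injEq] at h
    obtain ⟨h1, h2, h3⟩ := hinj x y z x' y' z' h.1.1 h.1.2 h.2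
    rw [h1, h2, h3]
  have hs := (hf.comp_injective he).hasSum
  have h1 : HasSum (fun x : (ℤ × ℕ) × ℤ => if P x.2 x.1.1 (x.1.2 + 1) then f x else 0)
      (∑' t, (f ∘ e) t) := by
    refine (he.hasSum_iff ?_).1 (hs.congr_fun' fun t => ?_)
    · rintro ⟨⟨m, n⟩, l⟩ hx
      refine if_neg fun hp => hx ?_
      obtain ⟨x, y, z, h1, h2, h3⟩ := hsurj l m n hp
      exact ⟨(x, y, z), by simp only [e, h1, h2, h3]⟩
    · exact if_pos (hP t.1 t.2.1 t.2.2)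
  refine h1.congr_val ?_
  rw [Zlam1, Z3, ← tsum_mul_left]
  refine tsum_congr fun t => ?_
  simp only [Function.comp, e]
  rw [hfe, div_eq_mul_inv]
  simp only [mul_inv]

/- the twelve chambers -/
abbrev P1 (l m n : ℤ) : Prop := 0 < l ∧ 0 < m
abbrev P2 (l m n : ℤ) : Prop := l < 0 ∧ 0 < l + m
abbrev P3 (l m n : ℤ) : Prop := l + m < 0 ∧ 0 < m ∧ 0 < l + m + n
abbrev P4 (l m n : ℤ) : Prop := 0 < m ∧ l + m + n < 0
abbrev P5 (l m n : ℤ) : Prop := m < 0 ∧ 0 < l + m ∧ 0 < m + n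
abbrev P6 (l m n : ℤ) : Prop := m + n < 0 ∧ 0 < l + m
abbrev P7 (l m n : ℤ) : Prop := 0 < l ∧ l + m < 0 ∧ 0 < m + n
abbrev P8 (l m n : ℤ) : Prop := m + n < 0 ∧ l + m < 0 ∧ 0 < l + m + n
abbrev P9 (l m n : ℤ) : Prop := 0 < l ∧ l + m + n < 0
abbrev P10 (l m n : ℤ) : Prop := l < 0 ∧ m < 0 ∧ 0 < l + m + n
abbrev P11 (l m n : ℤ) : Prop := m < 0 ∧ 0 < m + n ∧ l + m + n < 0
abbrev P12 (l m n : ℤ) : Prop := l < 0 ∧ m + n < 0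

lemma chamber1 (p q a b c : ℕ) (hp : 0 < p) (hq : 0 < q) (ha : 0 < a)
    (hb : 0 < b) (hc : 0 < c) (s : ℂ) (hs : 1 < s.re) :
    HasSum (fun x : (ℤ × ℕ) × ℤ =>
      if P1 x.2 x.1.1 (x.1.2 + 1) then FF p q a b c s x else 0)
      (1 * Zlam1 p q s a b c) := by
  refine chamber _ (summable_FF p q a b c hp hq ha hb hc s hs) (fun x y z => ((y + 1 : ℕ) : ℤ))
    (fun x y z => z) (fun x y z => ((x + 1 : ℕ) : ℤ)) P1
    (by intros; omega) (by intros; simp only [P1]; omega)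
    (by
      intro l m n h
      simp only [P1] at h
      exact ⟨(l - 1).toNat, (m - 1).toNat, (((n : ℤ) + 1) - 1).toNat, by omega, by omega, by omega⟩) _ _ _ _ _ _ _ ?_
  intro x y z
  rw [FF_eval p q a b c hp ha hc s _ _ _ (1) (1) (1) (1) (1) (x + 1) (y + 1) (x + 1 + (y + 1))
    (y + 1 + (z + 1)) (x + 1 + (y + 1) + (z + 1)) (z + 1)
    (3 * (x + 1) + 2 * (y + 1) + (z + 1)) (by norm_num) (by norm_num) (by norm_num) (by norm_num)
    (by norm_num) (by omega) (by omega) (by omega) (by omega) (by omega) (by omega) (by omega)]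
  push_cast
  simp only [one_pow, pow_add]
  ring

lemma chamber2 (p q a b c : ℕ) (hp : 0 < p) (hq : 0 < q) (ha : 0 < a)
    (hb : 0 < b) (hc : 0 < c) (s : ℂ) (hs : 1 < s.re) :
    HasSum (fun x : (ℤ × ℕ) × ℤ =>
      if P2 x.2 x.1.1 (x.1.2 + 1) then FF p q a b c s x else 0)
      ((-1 : ℂ) ^ (p) * Zlam1 p a s q c b) := by
  refine chamber _ (summable_FF p q a b c hp hq ha hb hc s hs) (fun x y z => ((x + 1 + (y + 1) : ℕ) : ℤ))
    (fun x y z => z) (fun x y z => -((x + 1 : ℕ) : ℤ)) P2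
    (by intros; omega) (by intros; simp only [P2]; omega)
    (by
      intro l m n h
      simp only [P2] at h
      exact ⟨(-l - 1).toNat, ((l + m) - 1).toNat, (((n : ℤ) + 1) - 1).toNat, by omega, by omega, by omega⟩) _ _ _ _ _ _ _ ?_
  intro x y z
  rw [FF_eval p q a b c hp ha hc s _ _ _ (-1) (1) (1) (1) (1) (x + 1) (x + 1 + (y + 1)) (y + 1)
    (x + 1 + (y + 1) + (z + 1)) (y + 1 + (z + 1)) (z + 1)
    (3 * (x + 1) + 2 * (y + 1) + (z + 1)) (by norm_num) (by norm_num) (by norm_num) (by norm_num)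
    (by norm_num) (by omega) (by omega) (by omega) (by omega) (by omega) (by omega) (by omega)]
  push_cast
  simp only [one_pow, pow_add]
  ring

lemma chamber3 (p q a b c : ℕ) (hp : 0 < p) (hq : 0 < q) (ha : 0 < a)
    (hb : 0 < b) (hc : 0 < c) (s : ℂ) (hs : 1 < s.re) :
    HasSum (fun x : (ℤ × ℕ) × ℤ =>
      if P3 x.2 x.1.1 (x.1.2 + 1) then FF p q a b c s x else 0)
      ((-1 : ℂ) ^ (p + a) * Zlam1 q a c p s b) := by
  refine chamber _ (summable_FF p q a b c hp hq ha hb hc s hs) (fun x y z => ((x + 1 : ℕ) : ℤ))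
    (fun x y z => y + z + 1) (fun x y z => -((x + 1 + (y + 1) : ℕ) : ℤ)) P3
    (by intros; omega) (by intros; simp only [P3]; omega)
    (by
      intro l m n h
      simp only [P3] at h
      exact ⟨(m - 1).toNat, (-(l + m) - 1).toNat, ((l + m + ((n : ℤ) + 1)) - 1).toNat, by omega, by omega, by omega⟩) _ _ _ _ _ _ _ ?_
  intro x y z
  rw [FF_eval p q a b c hp ha hc s _ _ _ (-1) (1) (-1) (1) (1) (x + 1 + (y + 1)) (x + 1) (y + 1)
    (x + 1 + (y + 1) + (z + 1)) (z + 1) (y + 1 + (z + 1))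
    (3 * (x + 1) + 2 * (y + 1) + (z + 1)) (by norm_num) (by norm_num) (by norm_num) (by norm_num)
    (by norm_num) (by omega) (by omega) (by omega) (by omega) (by omega) (by omega) (by omega)]
  push_cast
  simp only [one_pow, pow_add]
  ring

lemma chamber4 (p q a b c : ℕ) (hp : 0 < p) (hq : 0 < q) (ha : 0 < a)
    (hb : 0 < b) (hc : 0 < c) (s : ℂ) (hs : 1 < s.re) :
    HasSum (fun x : (ℤ × ℕ) × ℤ =>
      if P4 x.2 x.1.1 (x.1.2 + 1) then FF p q a b c s x else 0)
      ((-1 : ℂ) ^ (p + a + c) * Zlam1 q s c b a p) := by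
  refine chamber _ (summable_FF p q a b c hp hq ha hb hc s hs) (fun x y z => ((x + 1 : ℕ) : ℤ))
    (fun x y z => y) (fun x y z => -((x + 1 + (y + 1) + (z + 1) : ℕ) : ℤ)) P4
    (by intros; omega) (by intros; simp only [P4]; omega)
    (by
      intro l m n h
      simp only [P4] at h
      exact ⟨(m - 1).toNat, (((n : ℤ) + 1) - 1).toNat, (-(l + m + ((n : ℤ) + 1)) - 1).toNat, by omega, by omega, by omega⟩) _ _ _ _ _ _ _ ?_
  intro x y z
  rw [FF_eval p q a b c hp ha hc s _ _ _ (-1) (1) (-1) (1) (-1) (x + 1 + (y + 1) + (z + 1)) (x + 1) (y + 1 + (z + 1))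
    (x + 1 + (y + 1)) (z + 1) (y + 1)
    (3 * (x + 1) + 2 * (y + 1) + (z + 1)) (by norm_num) (by norm_num) (by norm_num) (by norm_num)
    (by norm_num) (by omega) (by omega) (by omega) (by omega) (by omega) (by omega) (by omega)]
  push_cast
  simp only [one_pow, pow_add]
  ring

lemma chamber5 (p q a b c : ℕ) (hp : 0 < p) (hq : 0 < q) (ha : 0 < a)
    (hb : 0 < b) (hc : 0 < c) (s : ℂ) (hs : 1 < s.re) :
    HasSum (fun x : (ℤ × ℕ) × ℤ =>
      if P5 x.2 x.1.1 (x.1.2 + 1) then FF p q a b c s x else 0)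
      ((-1 : ℂ) ^ (q) * Zlam1 a q b p s c) := by
  refine chamber _ (summable_FF p q a b c hp hq ha hb hc s hs) (fun x y z => -((y + 1 : ℕ) : ℤ))
    (fun x y z => y + z + 1) (fun x y z => ((x + 1 + (y + 1) : ℕ) : ℤ)) P5
    (by intros; omega) (by intros; simp only [P5]; omega)
    (by
      intro l m n h
      simp only [P5] at h
      exact ⟨((l + m) - 1).toNat, (-m - 1).toNat, ((m + ((n : ℤ) + 1)) - 1).toNat, by omega, by omega, by omega⟩) _ _ _ _ _ _ _ ?_
  intro x y z
  rw [FF_eval p q a b c hp ha hc s _ _ _ (1) (-1) (1) (1) (1) (x + 1 + (y + 1)) (y + 1) (x + 1)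
    (z + 1) (x + 1 + (y + 1) + (z + 1)) (y + 1 + (z + 1))
    (3 * (x + 1) + 2 * (y + 1) + (z + 1)) (by norm_num) (by norm_num) (by norm_num) (by norm_num)
    (by norm_num) (by omega) (by omega) (by omega) (by omega) (by omega) (by omega) (by omega)]
  push_cast
  simp only [one_pow, pow_add]
  ring

lemma chamber6 (p q a b c : ℕ) (hp : 0 < p) (hq : 0 < q) (ha : 0 < a)
    (hb : 0 < b) (hc : 0 < c) (s : ℂ) (hs : 1 < s.re) :
    HasSum (fun x : (ℤ × ℕ) × ℤ =>
      if P6 x.2 x.1.1 (x.1.2 + 1) then FF p q a b c s x else 0)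
      ((-1 : ℂ) ^ (q + b) * Zlam1 a s b c q p) := by
  refine chamber _ (summable_FF p q a b c hp hq ha hb hc s hs) (fun x y z => -((y + 1 + (z + 1) : ℕ) : ℤ))
    (fun x y z => y) (fun x y z => ((x + 1 + (y + 1) + (z + 1) : ℕ) : ℤ)) P6
    (by intros; omega) (by intros; simp only [P6]; omega)
    (by
      intro l m n h
      simp only [P6] at h
      exact ⟨((l + m) - 1).toNat, (((n : ℤ) + 1) - 1).toNat, (-(m + ((n : ℤ) + 1)) - 1).toNat, by omega, by omega, by omega⟩) _ _ _ _ _ _ _ ?_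
  intro x y z
  rw [FF_eval p q a b c hp ha hc s _ _ _ (1) (-1) (1) (-1) (1) (x + 1 + (y + 1) + (z + 1)) (y + 1 + (z + 1)) (x + 1)
    (z + 1) (x + 1 + (y + 1)) (y + 1)
    (3 * (x + 1) + 2 * (y + 1) + (z + 1)) (by norm_num) (by norm_num) (by norm_num) (by norm_num)
    (by norm_num) (by omega) (by omega) (by omega) (by omega) (by omega) (by omega) (by omega)]
  push_cast
  simp only [one_pow, pow_add]
  ring

lemma chamber7 (p q a b c : ℕ) (hp : 0 < p) (hq : 0 < q) (ha : 0 < a)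
    (hb : 0 < b) (hc : 0 < c) (s : ℂ) (hs : 1 < s.re) :
    HasSum (fun x : (ℤ × ℕ) × ℤ =>
      if P7 x.2 x.1.1 (x.1.2 + 1) then FF p q a b c s x else 0)
      ((-1 : ℂ) ^ (q + a) * Zlam1 a p b q c s) := by
  refine chamber _ (summable_FF p q a b c hp hq ha hb hc s hs) (fun x y z => -((x + 1 + (y + 1) : ℕ) : ℤ))
    (fun x y z => x + y + z + 2) (fun x y z => ((y + 1 : ℕ) : ℤ)) P7
    (by intros; omega) (by intros; simp only [P7]; omega)
    (by
      intro l m n h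
      simp only [P7] at h
      exact ⟨(-(l + m) - 1).toNat, (l - 1).toNat, ((m + ((n : ℤ) + 1)) - 1).toNat, by omega, by omega, by omega⟩) _ _ _ _ _ _ _ ?_
  intro x y z
  rw [FF_eval p q a b c hp ha hc s _ _ _ (1) (-1) (-1) (1) (1) (y + 1) (x + 1 + (y + 1)) (x + 1)
    (z + 1) (y + 1 + (z + 1)) (x + 1 + (y + 1) + (z + 1))
    (3 * (x + 1) + 2 * (y + 1) + (z + 1)) (by norm_num) (by norm_num) (by norm_num) (by norm_num)
    (by norm_num) (by omega) (by omega) (by omega) (by omega) (by omega) (by omega) (by omega)]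
  push_cast
  simp only [one_pow, pow_add]
  ring

lemma chamber8 (p q a b c : ℕ) (hp : 0 < p) (hq : 0 < q) (ha : 0 < a)
    (hb : 0 < b) (hc : 0 < c) (s : ℂ) (hs : 1 < s.re) :
    HasSum (fun x : (ℤ × ℕ) × ℤ =>
      if P8 x.2 x.1.1 (x.1.2 + 1) then FF p q a b c s x else 0)
      ((-1 : ℂ) ^ (q + a + b) * Zlam1 a c b s p q) := by
  refine chamber _ (summable_FF p q a b c hp hq ha hb hc s hs) (fun x y z => -((x + 1 + (y + 1) + (z + 1) : ℕ) : ℤ))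
    (fun x y z => x + y + 1) (fun x y z => ((y + 1 + (z + 1) : ℕ) : ℤ)) P8
    (by intros; omega) (by intros; simp only [P8]; omega)
    (by
      intro l m n h
      simp only [P8] at h
      exact ⟨(-(l + m) - 1).toNat, ((l + m + ((n : ℤ) + 1)) - 1).toNat, (-(m + ((n : ℤ) + 1)) - 1).toNat, by omega, by omega, by omega⟩) _ _ _ _ _ _ _ ?_
  intro x y z
  rw [FF_eval p q a b c hp ha hc s _ _ _ (1) (-1) (-1) (-1) (1) (y + 1 + (z + 1)) (x + 1 + (y + 1) + (z + 1)) (x + 1)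
    (z + 1) (y + 1) (x + 1 + (y + 1))
    (3 * (x + 1) + 2 * (y + 1) + (z + 1)) (by norm_num) (by norm_num) (by norm_num) (by norm_num)
    (by norm_num) (by omega) (by omega) (by omega) (by omega) (by omega) (by omega) (by omega)]
  push_cast
  simp only [one_pow, pow_add]
  ring

lemma chamber9 (p q a b c : ℕ) (hp : 0 < p) (hq : 0 < q) (ha : 0 < a)
    (hb : 0 < b) (hc : 0 < c) (s : ℂ) (hs : 1 < s.re) :
    HasSum (fun x : (ℤ × ℕ) × ℤ =>
      if P9 x.2 x.1.1 (x.1.2 + 1) then FF p q a b c s x else 0)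
      ((-1 : ℂ) ^ (q + a + b + c) * Zlam1 s c p a b q) := by
  refine chamber _ (summable_FF p q a b c hp hq ha hb hc s hs) (fun x y z => -((x + 1 + (y + 1) + (z + 1) : ℕ) : ℤ))
    (fun x y z => x) (fun x y z => ((z + 1 : ℕ) : ℤ)) P9
    (by intros; omega) (by intros; simp only [P9]; omega)
    (by
      intro l m n h
      simp only [P9] at h
      exact ⟨(((n : ℤ) + 1) - 1).toNat, (-(l + m + ((n : ℤ) + 1)) - 1).toNat, (l - 1).toNat, by omega, by omega, by omega⟩) _ _ _ _ _ _ _ ?_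
  intro x y z
  rw [FF_eval p q a b c hp ha hc s _ _ _ (1) (-1) (-1) (-1) (-1) (z + 1) (x + 1 + (y + 1) + (z + 1)) (x + 1 + (y + 1))
    (y + 1 + (z + 1)) (y + 1) (x + 1)
    (3 * (x + 1) + 2 * (y + 1) + (z + 1)) (by norm_num) (by norm_num) (by norm_num) (by norm_num)
    (by norm_num) (by omega) (by omega) (by omega) (by omega) (by omega) (by omega) (by omega)]
  push_cast
  simp only [one_pow, pow_add]
  ring

lemma chamber10 (p q a b c : ℕ) (hp : 0 < p) (hq : 0 < q) (ha : 0 < a)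
    (hb : 0 < b) (hc : 0 < c) (s : ℂ) (hs : 1 < s.re) :
    HasSum (fun x : (ℤ × ℕ) × ℤ =>
      if P10 x.2 x.1.1 (x.1.2 + 1) then FF p q a b c s x else 0)
      ((-1 : ℂ) ^ (p + q + a) * Zlam1 q p c a b s) := by
  refine chamber _ (summable_FF p q a b c hp hq ha hb hc s hs) (fun x y z => -((x + 1 : ℕ) : ℤ))
    (fun x y z => x + y + z + 2) (fun x y z => -((y + 1 : ℕ) : ℤ)) P10
    (by intros; omega) (by intros; simp only [P10]; omega)
    (by
      intro l m n h
      simp only [P10] at h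
      exact ⟨(-m - 1).toNat, (-l - 1).toNat, ((l + m + ((n : ℤ) + 1)) - 1).toNat, by omega, by omega, by omega⟩) _ _ _ _ _ _ _ ?_
  intro x y z
  rw [FF_eval p q a b c hp ha hc s _ _ _ (-1) (-1) (-1) (1) (1) (y + 1) (x + 1) (x + 1 + (y + 1))
    (y + 1 + (z + 1)) (z + 1) (x + 1 + (y + 1) + (z + 1))
    (3 * (x + 1) + 2 * (y + 1) + (z + 1)) (by norm_num) (by norm_num) (by norm_num) (by norm_num)
    (by norm_num) (by omega) (by omega) (by omega) (by omega) (by omega) (by omega) (by omega)]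
  push_cast
  simp only [one_pow, pow_add]
  ring

lemma chamber11 (p q a b c : ℕ) (hp : 0 < p) (hq : 0 < q) (ha : 0 < a)
    (hb : 0 < b) (hc : 0 < c) (s : ℂ) (hs : 1 < s.re) :
    HasSum (fun x : (ℤ × ℕ) × ℤ =>
      if P11 x.2 x.1.1 (x.1.2 + 1) then FF p q a b c s x else 0)
      ((-1 : ℂ) ^ (p + q + a + c) * Zlam1 q b c s p a) := by
  refine chamber _ (summable_FF p q a b c hp hq ha hb hc s hs) (fun x y z => -((x + 1 : ℕ) : ℤ))
    (fun x y z => x + y + 1) (fun x y z => -((y + 1 + (z + 1) : ℕ) : ℤ)) P11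
    (by intros; omega) (by intros; simp only [P11]; omega)
    (by
      intro l m n h
      simp only [P11] at h
      exact ⟨(-m - 1).toNat, ((m + ((n : ℤ) + 1)) - 1).toNat, (-(l + m + ((n : ℤ) + 1)) - 1).toNat, by omega, by omega, by omega⟩) _ _ _ _ _ _ _ ?_
  intro x y z
  rw [FF_eval p q a b c hp ha hc s _ _ _ (-1) (-1) (-1) (1) (-1) (y + 1 + (z + 1)) (x + 1) (x + 1 + (y + 1) + (z + 1))
    (y + 1) (z + 1) (x + 1 + (y + 1))
    (3 * (x + 1) + 2 * (y + 1) + (z + 1)) (by norm_num) (by norm_num) (by norm_num) (by norm_num)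
    (by norm_num) (by omega) (by omega) (by omega) (by omega) (by omega) (by omega) (by omega)]
  push_cast
  simp only [one_pow, pow_add]
  ring

lemma chamber12 (p q a b c : ℕ) (hp : 0 < p) (hq : 0 < q) (ha : 0 < a)
    (hb : 0 < b) (hc : 0 < c) (s : ℂ) (hs : 1 < s.re) :
    HasSum (fun x : (ℤ × ℕ) × ℤ =>
      if P12 x.2 x.1.1 (x.1.2 + 1) then FF p q a b c s x else 0)
      ((-1 : ℂ) ^ (p + q + a + b + c) * Zlam1 s b p q c a) := by
  refine chamber _ (summable_FF p q a b c hp hq ha hb hc s hs) (fun x y z => -((x + 1 + (y + 1) : ℕ) : ℤ))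
    (fun x y z => x) (fun x y z => -((z + 1 : ℕ) : ℤ)) P12
    (by intros; omega) (by intros; simp only [P12]; omega)
    (by
      intro l m n h
      simp only [P12] at h
      exact ⟨(((n : ℤ) + 1) - 1).toNat, (-(m + ((n : ℤ) + 1)) - 1).toNat, (-l - 1).toNat, by omega, by omega, by omega⟩) _ _ _ _ _ _ _ ?_
  intro x y z
  rw [FF_eval p q a b c hp ha hc s _ _ _ (-1) (-1) (-1) (-1) (-1) (z + 1) (x + 1 + (y + 1)) (x + 1 + (y + 1) + (z + 1))
    (y + 1) (y + 1 + (z + 1)) (x + 1)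
    (3 * (x + 1) + 2 * (y + 1) + (z + 1)) (by norm_num) (by norm_num) (by norm_num) (by norm_num)
    (by norm_num) (by omega) (by omega) (by omega) (by omega) (by omega) (by omega) (by omega)]
  push_cast
  simp only [one_pow, pow_add]
  ring


lemma FF_zero (p q a b c : ℕ) (hp : 0 < p) (hq : 0 < q) (ha : 0 < a)
    (hb : 0 < b) (hc : 0 < c) (s : ℂ) (l m : ℤ) (n : ℕ)
    (h : l = 0 ∨ m = 0 ∨ l + m = 0 ∨ m + (n + 1) = 0 ∨ l + m + (n + 1) = 0) :
    FF p q a b c s ((m, n), l) = 0 := by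
  simp only [FF, Vt]
  rw [dl_pos hp.ne', dl_pos ha.ne', dl_pos hc.ne']
  rcases h with h | h | h | h | h <;> rw [h] <;>
    simp [hp.ne', hq.ne', ha.ne', hb.ne', hc.ne']

lemma ite_split (v : ℂ) (l m n : ℤ) (hn : 0 < n)
    (h : (l = 0 ∨ m = 0 ∨ l + m = 0 ∨ m + n = 0 ∨ l + m + n = 0) → v = 0) :
    v = (if P1 l m n then v else 0) + (if P2 l m n then v else 0) + (if P3 l m n then v else 0) +
      (if P4 l m n then v else 0) + (if P5 l m n then v else 0) + (if P6 l m n then v else 0) +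
      (if P7 l m n then v else 0) + (if P8 l m n then v else 0) + (if P9 l m n then v else 0) +
      (if P10 l m n then v else 0) + (if P11 l m n then v else 0) +
      (if P12 l m n then v else 0) := by
  by_cases h0 : l = 0 ∨ m = 0 ∨ l + m = 0 ∨ m + n = 0 ∨ l + m + n = 0
  · rw [h h0]; simp
  · simp only [not_or] at h0
    obtain ⟨h1, h2, h3, h4, h5⟩ := h0
    have g : ∀ z : ℤ, z ≠ 0 → (0 < z ∧ ¬ z < 0) ∨ (¬ 0 < z ∧ z < 0) := by intro z hz; omega
    rcases g _ h1 with k1 | k1 <;> rcases g _ h2 with k2 | k2 <;> rcases g _ h3 with k3 | k3 <;>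
    rcases g _ h4 with k4 | k4 <;> rcases g _ h5 with k5 | k5 <;>
    first
    | (exfalso; omega)
    | (simp only [P1, P2, P3, P4, P5, P6, P7, P8, P9, P10, P11, P12, k1, k2, k3, k4, k5, and_self,
        and_true, true_and, and_false, false_and, if_true, if_false, add_zero, zero_add])

lemma tsum_FF_eq_S (p q a b c : ℕ) (hp : 0 < p) (hq : 0 < q) (ha : 0 < a)
    (hb : 0 < b) (hc : 0 < c) (s : ℂ) (hs : 1 < s.re) :
    ∑' x, FF p q a b c s x = Scomb Zlam1 p q a b c s := by
  have k1 := chamber1 p q a b c hp hq ha hb hc s hs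
  rw [one_mul] at k1
  have k := (((((((((((k1.add
    (chamber2 p q a b c hp hq ha hb hc s hs)).add
    (chamber3 p q a b c hp hq ha hb hc s hs)).add
    (chamber4 p q a b c hp hq ha hb hc s hs)).add
    (chamber5 p q a b c hp hq ha hb hc s hs)).add
    (chamber6 p q a b c hp hq ha hb hc s hs)).add
    (chamber7 p q a b c hp hq ha hb hc s hs)).add
    (chamber8 p q a b c hp hq ha hb hc s hs)).add
    (chamber9 p q a b c hp hq ha hb hc s hs)).add
    (chamber10 p q a b c hp hq ha hb hc s hs)).add
    (chamber11 p q a b c hp hq ha hb hc s hs)).add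
    (chamber12 p q a b c hp hq ha hb hc s hs))
  rw [Scomb]
  refine (k.congr_fun' fun x => ?_).tsum_eq
  exact ite_split _ x.2 x.1.1 (x.1.2 + 1) (by omega)
    (FF_zero p q a b c hp hq ha hb hc s x.2 x.1.1 x.1.2)

/-- Functional relation for `ζ₃(·,λ₁∨;SU(4))`
(Theorem 7.3, first relation, of Komori–Matsumoto–Tsumura). -/
theorem functional_relation_SU4_lam1 (p q a b c : ℕ) (hp : 0 < p) (hq : 0 < q) (ha : 0 < a)
    (hb : 0 < b) (hc : 0 < c) (s : ℂ) (hs : 1 < s.re) :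
    Scomb Zlam1 p q a b c s = J1 p q a b c s := by
  rw [← tsum_FF_eq_S p q a b c hp hq ha hb hc s hs, tsum_FF_eq_J1 p q a b c hp hq ha hb hc s hs]
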